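/- arXiv:2011.07056 — 5 statements merged into one kernel-verified Lean document; each statement's English description precedes it below -/
import Mathlib

section
/- There is an absolute constant C > 0 such that for every finite set U = {u_1 < u_2 < ... < u_k} of positive integers and every integer N ≥ 2, G'_U(N) ≤ G_U(N) ≤ C·(u_k + 1)^2·(log N)·G'_U(N). -/
/-!
Suppose `B` contains `U`-patterns with `N` basepoints `X`. Embed `X` in `ZMod P` for a large prime
`P`, dilate by a random `l`, and reduce the representatives in `[0, P)` modulo `N`. Two distinct
points collide with probability `O(1 / N)`, so by Cauchy–Schwarz some `l` maps `X` onto a positive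
proportion of `ZMod N`; and patterns survive the map up to an error `j * P` with `|j| ≤ max |u|`,
which costs one factor `max |u| + 1` in the size of `B`. Then `O(log N)` translates cover all
basepoints in `ZMod N`. Finally each residue is lifted to the integers in an interval of length
`O((max |u| + 1) * N)`, which costs the other factor `max |u| + 1`.
-/

/-- `G'U U N` : the minimum cardinality of a finite set `B ⊆ ℤ` containing a `U`-pattern
`{x + r·u : u ∈ U}` (with `r ≠ 0`) for `N` distinct integer basepoints `x`. -/
noncomputable def G'U (U : Finset ℤ) (N : ℕ) : ℕ :=
  sInf { m | ∃ B : Finset ℤ, B.card = m ∧ ∃ X : Finset ℤ, X.card = N ∧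
    ∀ x ∈ X, ∃ r : ℤ, r ≠ 0 ∧ ∀ u ∈ U, x + r * u ∈ B }

/-- `GU U N` : the minimum cardinality of a finite set `B ⊆ ℤ` containing a `U`-pattern
(with nonzero scaling factor) with basepoint `x` for every `x ∈ {1, …, N}`. -/
noncomputable def GU (U : Finset ℤ) (N : ℕ) : ℕ :=
  sInf { m | ∃ B : Finset ℤ, B.card = m ∧
    ∀ x ∈ Finset.Icc (1 : ℤ) (N : ℤ), ∃ r : ℤ, r ≠ 0 ∧ ∀ u ∈ U, x + r * u ∈ B }

open Finset
open scoped Pointwise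

section Covering

variable {G : Type*} [AddGroup G] [Fintype G] [DecidableEq G]

lemma sum_card_inter_vadd (A S : Finset G) : ∑ t : G, #(A ∩ (t +ᵥ S)) = #A * #S := by
  simp only [card_inter_vadd, addConvolution]
  rw [← card_eq_sum_card_fiberwise (t := univ) (fun _ _ ↦ mem_univ _), card_product, card_neg]

lemma exists_dens_mul_dens_le_dens_inter_vadd (A S : Finset G) :
    ∃ t : G, A.dens * S.dens ≤ (A ∩ (t +ᵥ S)).dens := by
  obtain ⟨t, -, ht⟩ : ∃ t ∈ (univ : Finset G), #A * #S ≤ Fintype.card G * #(A ∩ (t +ᵥ S)) := by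
    apply exists_le_of_sum_le univ_nonempty
    rw [← mul_sum _ _ (Fintype.card G), sum_card_inter_vadd, sum_const, smul_eq_mul, card_univ]
  refine ⟨t, ?_⟩
  have hG : (0 : ℚ≥0) < Fintype.card G := by exact_mod_cast Fintype.card_pos
  rw [dens_eq_card_div_card, dens_eq_card_div_card, dens_eq_card_div_card, div_mul_div_comm,
    div_le_div_iff₀ (by positivity) hG]
  have ht' : (#A * #S : ℚ≥0) ≤ Fintype.card G * #(A ∩ (t +ᵥ S)) := by exact_mod_cast ht
  calc (#A * #S : ℚ≥0) * Fintype.card G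
      ≤ Fintype.card G * #(A ∩ (t +ᵥ S)) * Fintype.card G := by gcongr
    _ = #(A ∩ (t +ᵥ S)) * (Fintype.card G * Fintype.card G) := by ring

lemma exists_dens_compl_add_le_pow (S : Finset G) (k : ℕ) :
    ∃ T : Finset G, #T ≤ k ∧ ((T + S)ᶜ.dens : ℝ) ≤ (1 - S.dens) ^ k := by
  induction k with
  | zero => exact ⟨∅, by simp, by simp⟩
  | succ k ih =>
    obtain ⟨T, hT, hdens⟩ := ih
    obtain ⟨t, ht⟩ := exists_dens_mul_dens_le_dens_inter_vadd (T + S)ᶜ S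
    refine ⟨insert t T, (card_insert_le t T).trans (by lia), ?_⟩
    have hcompl : (insert t T + S)ᶜ = (T + S)ᶜ \ (t +ᵥ S) := by
      rw [insert_eq, union_add, ← vadd_eq_add, singleton_vadd, union_comm, compl_union,
        sdiff_eq_inter_compl]
    have hsplit : (((T + S)ᶜ \ (t +ᵥ S)).dens + ((T + S)ᶜ ∩ (t +ᵥ S)).dens : ℝ) =
        (T + S)ᶜ.dens := by
      exact_mod_cast dens_sdiff_add_dens_inter (T + S)ᶜ (t +ᵥ S)
    have ht' : ((T + S)ᶜ.dens * S.dens : ℝ) ≤ ((T + S)ᶜ ∩ (t +ᵥ S)).dens := by exact_mod_cast ht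
    have hS : (0 : ℝ) ≤ 1 - S.dens := sub_nonneg.2 (by exact_mod_cast S.dens_le_one)
    rw [hcompl]
    calc (((T + S)ᶜ \ (t +ᵥ S)).dens : ℝ) ≤ (T + S)ᶜ.dens * (1 - S.dens) := by linarith
      _ ≤ (1 - S.dens) ^ k * (1 - S.dens) := by gcongr
      _ = (1 - S.dens) ^ (k + 1) := (pow_succ _ _).symm

theorem exists_add_eq_univ {S : Finset G} (hS : S.Nonempty) :
    ∃ T : Finset G, T + S = univ ∧ (#T : ℝ) ≤ Real.log (Fintype.card G) / S.dens + 1 := by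
  have hG : (0 : ℝ) < Fintype.card G := by exact_mod_cast Fintype.card_pos
  have hS₀ : (0 : ℝ) < S.dens := by exact_mod_cast dens_pos.2 hS
  have hS₁ : (0 : ℝ) ≤ 1 - S.dens := sub_nonneg.2 (by exact_mod_cast S.dens_le_one)
  set L := Real.log (Fintype.card G) / S.dens
  have hL₀ : 0 ≤ L := div_nonneg (Real.log_natCast_nonneg _) hS₀.le
  set k := ⌊L⌋₊ + 1 with hk
  have hLk : L < k := by exact_mod_cast Nat.lt_floor_add_one L
  obtain ⟨T, hT, hdens⟩ := exists_dens_compl_add_le_pow S k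
  refine ⟨T, ?_, ?_⟩
  · have hlt : ((T + S)ᶜ.dens : ℝ) < 1 / Fintype.card G := calc
      ((T + S)ᶜ.dens : ℝ) ≤ (1 - S.dens) ^ k := hdens
      _ ≤ Real.exp (-S.dens) ^ k := by gcongr; exact Real.one_sub_le_exp_neg _
      _ = Real.exp (-(k * S.dens)) := by rw [← Real.exp_nat_mul, mul_neg]
      _ < Real.exp (-Real.log (Fintype.card G)) :=
        Real.exp_lt_exp.2 (neg_lt_neg ((div_lt_iff₀ hS₀).1 hLk))
      _ = 1 / Fintype.card G := by rw [Real.exp_neg, Real.exp_log hG, one_div]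
    rw [nnratCast_dens, div_lt_div_iff_of_pos_right hG] at hlt
    have hcard : #(T + S)ᶜ = 0 := Nat.lt_one_iff.1 (by exact_mod_cast hlt)
    exact compl_eq_empty_iff _ |>.1 (card_eq_zero.1 hcard)
  · calc (#T : ℝ) ≤ k := by exact_mod_cast hT
      _ = ⌊L⌋₊ + 1 := by rw [hk, Nat.cast_add_one]
      _ ≤ L + 1 := by gcongr; exact Nat.floor_le hL₀

end Covering

lemma sq_card_le_card_image_mul_card_collisions {α β : Type*} [DecidableEq β] (s : Finset α)
    (f : α → β) : #s ^ 2 ≤ #(s.image f) * #{p ∈ s ×ˢ s | f p.1 = f p.2} := by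
  have hfiber (z : β) :
      #{p ∈ {p ∈ s ×ˢ s | f p.1 = f p.2} | f p.1 = z} = #{x ∈ s | f x = z} ^ 2 := by
    rw [sq, ← card_product]
    congr 1
    grind
  have hmaps : Set.MapsTo (fun p : α × α ↦ f p.1) ({p ∈ s ×ˢ s | f p.1 = f p.2} : Finset (α × α))
      (s.image f) :=
    fun p hp ↦ mem_image_of_mem f (mem_product.1 (mem_filter.1 hp).1).1
  calc #s ^ 2 = (∑ z ∈ s.image f, #{x ∈ s | f x = z}) ^ 2 := by rw [← card_eq_sum_card_image]
    _ ≤ #(s.image f) * ∑ z ∈ s.image f, #{x ∈ s | f x = z} ^ 2 := sq_sum_le_card_mul_sum_sq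
    _ = #(s.image f) * #{p ∈ s ×ˢ s | f p.1 = f p.2} := by
      rw [card_eq_sum_card_fiberwise hmaps, sum_congr rfl fun z _ ↦ hfiber z]

/-- The map `ZMod P → ZMod N` that dilates by `l` and reduces the representative in `[0, P)`
modulo `N`. It is not additive, but for prime `P` and random `l` it behaves like a universal hash
function. -/
def dilateMod {P : ℕ} (N : ℕ) (l x : ZMod P) : ZMod N := (l * x).val

section DilateMod

variable {P : ℕ} [Fact P.Prime] {N : ℕ}

lemma dilateMod_add_mul_intCast (l x r : ZMod P) {u K : ℤ} (hu : |u| ≤ K) :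
    ∃ j ∈ Icc (-K) K,
      dilateMod N l x + dilateMod N l r * u = dilateMod N l (x + r * u) + (j * P : ℤ) := by
  have hP : (0 : ℤ) < P := by exact_mod_cast (Fact.out : P.Prime).pos
  set a := (l * x).val with ha
  set c := (l * r).val with hc
  have haP : (a : ℤ) < P := by exact_mod_cast ZMod.val_lt _
  have hcP : (c : ℤ) < P := by exact_mod_cast ZMod.val_lt _
  have hval : ((l * (x + r * u)).val : ℤ) = (a + c * u) % P := by
    rw [← ZMod.val_intCast]
    push_cast
    rw [ha, hc, ZMod.natCast_zmod_val, ZMod.natCast_zmod_val, mul_add, mul_assoc]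
  have hcu : |c * u| ≤ P * K := by
    rw [abs_mul, Nat.abs_cast]
    gcongr
  refine ⟨(a + c * u) / P, mem_Icc.2 ⟨?_, ?_⟩, ?_⟩
  · rw [Int.le_ediv_iff_mul_le hP]
    linarith [neg_le_of_abs_le hcu]
  · rw [← Int.lt_add_one_iff, Int.ediv_lt_iff_lt_mul hP]
    linarith [le_of_abs_le hcu]
  · have hdiv : (a + c * u : ℤ) = (l * (x + r * u)).val + (a + c * u) / P * P := by
      rw [hval, Int.emod_add_ediv_mul]
    simpa [dilateMod, a, c] using congrArg (Int.cast : ℤ → ZMod N) hdiv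

/-- The difference of the representatives of `l * x` and `l * y` is a multiple of `N` in `(-P, P)`,
and it determines `l`. -/
lemma card_dilateMod_eq_le {x y : ZMod P} (hxy : x ≠ y) :
    #{l : ZMod P | dilateMod N l x = dilateMod N l y} ≤ 2 * (P / N) + 1 := by
  set δ : ZMod P → ℤ := fun l ↦ (l * x).val - (l * y).val
  have hδ (l : ZMod P) : (δ l).natAbs ≤ P := by
    have hlx := ZMod.val_lt (l * x)
    have hly := ZMod.val_lt (l * y)
    lia
  have hdvd {l : ZMod P} (hl : dilateMod N l x = dilateMod N l y) : (N : ℤ) ∣ δ l := by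
    rw [← ZMod.intCast_eq_intCast_iff_dvd_sub]
    exact_mod_cast hl.symm
  have hinj : Function.Injective δ := by
    intro l l' hll'
    have hmul (l : ZMod P) : ((δ l : ℤ) : ZMod P) = l * (x - y) := by
      simp [δ, mul_sub]
    exact mul_right_cancel₀ (sub_ne_zero.2 hxy) (by rw [← hmul, ← hmul, hll'])
  calc #{l : ZMod P | dilateMod N l x = dilateMod N l y}
      ≤ #(Icc (-(P / N : ℕ) : ℤ) (P / N : ℕ)) := by
        refine card_le_card_of_injOn (δ · / N) (fun l hl ↦ ?_) (fun l hl l' hl' h ↦ hinj ?_)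
        · rw [mem_coe, mem_Icc, ← abs_le, Int.abs_eq_natAbs,
            Int.natAbs_ediv_of_dvd (hdvd (mem_filter.1 hl).2)]
          exact_mod_cast Nat.div_le_div_right (hδ l)
        · exact Int.ediv_left_inj (hdvd (mem_filter.1 hl).2) (hdvd (mem_filter.1 hl').2) |>.1 h
    _ = 2 * (P / N) + 1 := by rw [Int.card_Icc]; lia

lemma sum_card_dilateMod_collisions_le {X : Finset (ZMod P)} (hX : #X ≤ N) (hNP : N ≤ P) :
    ∑ l : ZMod P, #{p ∈ X ×ˢ X | dilateMod N l p.1 = dilateMod N l p.2} ≤ P * (4 * #X) := by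
  have hpair {x y : ZMod P} (hxy : x ≠ y) :
      N * #{l : ZMod P | dilateMod N l x = dilateMod N l y} ≤ 3 * P := calc
    _ ≤ N * (2 * (P / N) + 1) := by gcongr; exact card_dilateMod_eq_le hxy
    _ = 2 * (N * (P / N)) + N := by ring
    _ ≤ 3 * P := by linarith [Nat.mul_div_le P N]
  have hrow (x : ZMod P) (hx : x ∈ X) :
      ∑ y ∈ X, #{l : ZMod P | dilateMod N l x = dilateMod N l y} ≤ 4 * P := by
    refine le_of_mul_le_mul_left ?_ ((card_pos.2 ⟨x, hx⟩).trans_le hX)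
    calc N * ∑ y ∈ X, #{l : ZMod P | dilateMod N l x = dilateMod N l y}
        = N * P + ∑ y ∈ X.erase x, N * #{l : ZMod P | dilateMod N l x = dilateMod N l y} := by
          rw [← add_sum_erase X _ hx, mul_add, mul_sum]
          simp [ZMod.card]
      _ ≤ N * P + #(X.erase x) • (3 * P) := by
          gcongr
          exact sum_le_card_nsmul _ _ _ fun y hy ↦ hpair (ne_of_mem_erase hy).symm
      _ ≤ N * P + N * (3 * P) := by
          rw [smul_eq_mul]
          gcongr
          exact card_erase_le.trans hX
      _ = N * (4 * P) := by ring
  calc ∑ l : ZMod P, #{p ∈ X ×ˢ X | dilateMod N l p.1 = dilateMod N l p.2}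
      = ∑ p ∈ X ×ˢ X, #{l : ZMod P | dilateMod N l p.1 = dilateMod N l p.2} :=
        sum_card_bipartiteAbove_eq_sum_card_bipartiteBelow _
    _ = ∑ x ∈ X, ∑ y ∈ X, #{l : ZMod P | dilateMod N l x = dilateMod N l y} := sum_product ..
    _ ≤ #X • (4 * P) := sum_le_card_nsmul _ _ _ hrow
    _ = P * (4 * #X) := by rw [smul_eq_mul]; ring

theorem exists_card_le_four_mul_card_image_dilateMod {X : Finset (ZMod P)} (hX : #X ≤ N)
    (hNP : N ≤ P) : ∃ l : ZMod P, #X ≤ 4 * #(X.image (dilateMod N l)) := by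
  obtain ⟨l, -, hl⟩ :
      ∃ l ∈ univ, #{p ∈ X ×ˢ X | dilateMod N l p.1 = dilateMod N l p.2} ≤ 4 * #X := by
    apply exists_le_of_sum_le (univ_nonempty (α := ZMod P))
    simpa [ZMod.card] using sum_card_dilateMod_collisions_le hX hNP
  refine ⟨l, ?_⟩
  obtain rfl | hne := X.eq_empty_or_nonempty
  · simp
  refine le_of_mul_le_mul_left ?_ (card_pos.2 hne)
  calc #X * #X = #X ^ 2 := (sq _).symm
    _ ≤ #(X.image (dilateMod N l)) * (4 * #X) :=
      (sq_card_le_card_image_mul_card_collisions X _).trans (by gcongr)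
    _ = #X * (4 * #(X.image (dilateMod N l))) := by ring

end DilateMod

/-- `B` contains a `U`-pattern with basepoint `x` for every `x ∈ X`. Unlike in `GU` and `G'U` the
scaling factor may vanish, so that the notion is preserved by reduction to `ZMod N`. -/
def ContainsPatterns {R : Type*} [Ring R] (U : Finset ℤ) (B X : Finset R) : Prop :=
  ∀ x ∈ X, ∃ r : R, ∀ u ∈ U, x + r * u ∈ B

namespace ContainsPatterns

variable {R : Type*} [Ring R] {U : Finset ℤ} {B X : Finset R}

lemma image {S : Type*} [Ring S] [DecidableEq S] (h : ContainsPatterns U B X) (f : R →+* S) :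
    ContainsPatterns U (B.image f) (X.image f) := by
  simp only [ContainsPatterns, forall_mem_image]
  intro x hx
  obtain ⟨r, hr⟩ := h x hx
  refine ⟨f r, fun u hu ↦ ?_⟩
  simpa using mem_image_of_mem f (hr u hu)

lemma add_left [DecidableEq R] (h : ContainsPatterns U B X) (T : Finset R) :
    ContainsPatterns U (T + B) (T + X) := by
  simp only [ContainsPatterns, mem_add]
  rintro _ ⟨t, ht, x, hx, rfl⟩
  obtain ⟨r, hr⟩ := h x hx
  exact ⟨r, fun u hu ↦ ⟨t, ht, x + r * u, hr u hu, (add_assoc _ _ _).symm⟩⟩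

lemma image_dilateMod {P : ℕ} [Fact P.Prime] {B X : Finset (ZMod P)}
    (h : ContainsPatterns U B X) {K : ℤ} (hU : ∀ u ∈ U, |u| ≤ K) (N : ℕ) (l : ZMod P) :
    ContainsPatterns U
      (B.image (dilateMod N l) + (Icc (-K) K).image fun j ↦ ((j * P : ℤ) : ZMod N))
      (X.image (dilateMod N l)) := by
  simp only [ContainsPatterns, forall_mem_image]
  intro x hx
  obtain ⟨r, hr⟩ := h x hx
  refine ⟨dilateMod N l r, fun u hu ↦ ?_⟩
  obtain ⟨j, hj, hadd⟩ := dilateMod_add_mul_intCast (N := N) l x r (hU u hu)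
  rw [hadd]
  exact add_mem_add (mem_image_of_mem _ (hr u hu)) (mem_image_of_mem _ hj)

end ContainsPatterns

lemma exists_mem_Icc_intCast_eq {N : ℕ} [NeZero N] (c : ZMod N) :
    ∃ r ∈ Icc (1 : ℤ) N, (r : ZMod N) = c := by
  have hlt : (c - 1).val < N := ZMod.val_lt _
  exact ⟨(c - 1).val + 1, mem_Icc.2 ⟨by lia, by lia⟩, by simp⟩

section Extremal

variable {U : Finset ℤ} {N : ℕ}

lemma GU_le_card {B : Finset ℤ}
    (hB : ∀ x ∈ Icc (1 : ℤ) N, ∃ r : ℤ, r ≠ 0 ∧ ∀ u ∈ U, x + r * u ∈ B) : GU U N ≤ #B :=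
  Nat.sInf_le ⟨B, rfl, hB⟩

lemma exists_card_eq_GU (U : Finset ℤ) (N : ℕ) : ∃ B : Finset ℤ, #B = GU U N ∧
    ∀ x ∈ Icc (1 : ℤ) N, ∃ r : ℤ, r ≠ 0 ∧ ∀ u ∈ U, x + r * u ∈ B := by
  refine Nat.sInf_mem (s := {m | ∃ B : Finset ℤ, #B = m ∧
    ∀ x ∈ Icc (1 : ℤ) N, ∃ r : ℤ, r ≠ 0 ∧ ∀ u ∈ U, x + r * u ∈ B}) ?_
  refine ⟨_, Icc (1 : ℤ) N + U, rfl, fun x hx ↦ ⟨1, one_ne_zero, fun u hu ↦ ?_⟩⟩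
  rw [one_mul]
  exact add_mem_add hx hu

theorem G'U_le_GU (U : Finset ℤ) (N : ℕ) : G'U U N ≤ GU U N := by
  obtain ⟨B, hcard, hB⟩ := exists_card_eq_GU U N
  exact Nat.sInf_le ⟨B, hcard, Icc 1 N, by simp, hB⟩

lemma exists_card_eq_G'U (U : Finset ℤ) (N : ℕ) :
    ∃ B X : Finset ℤ, #B = G'U U N ∧ #X = N ∧ ContainsPatterns U B X := by
  obtain ⟨B₀, -, hB₀⟩ := exists_card_eq_GU U N
  obtain ⟨B, hcard, X, hX, hB⟩ : G'U U N ∈ _ :=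
    Nat.sInf_mem ⟨_, B₀, rfl, Icc 1 N, by simp, hB₀⟩
  exact ⟨B, X, hcard, hX, fun x hx ↦ (hB x hx).imp fun r hr ↦ hr.2⟩

theorem GU_le_mul_card_of_containsPatterns_univ [NeZero N] {K : ℕ} (hU : ∀ u ∈ U, |u| ≤ K)
    {D : Finset (ZMod N)} (hD : ContainsPatterns U D univ) : GU U N ≤ #D * (2 * K + 2) := by
  set B : Finset ℤ := image₂ (fun d q ↦ d.val + N * q) D (Icc (-K : ℤ) (K + 1))
  have hcard : #B ≤ #D * (2 * K + 2) :=
    (card_image₂_le _ _ _).trans_eq (by rw [Int.card_Icc]; congr 1; lia)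
  have hN : (0 : ℤ) < N := by exact_mod_cast NeZero.pos N
  refine (GU_le_card fun x hx ↦ ?_).trans hcard
  rw [mem_Icc] at hx
  obtain ⟨c, hc⟩ := hD x (mem_univ _)
  obtain ⟨r, hr, rfl⟩ := exists_mem_Icc_intCast_eq c
  rw [mem_Icc] at hr
  refine ⟨r, by lia, fun u hu ↦ ?_⟩
  have hru : |r * u| ≤ N * K := by
    rw [abs_mul, abs_of_nonneg (by lia)]
    exact mul_le_mul hr.2 (hU u hu) (abs_nonneg u) hN.le
  refine mem_image₂.2 ⟨(x + r * u : ℤ), by simpa using hc u hu, (x + r * u) / N, ?_, ?_⟩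
  · rw [mem_Icc, Int.le_ediv_iff_mul_le hN, ← Int.lt_add_one_iff (b := (K + 1 : ℤ)),
      Int.ediv_lt_iff_lt_mul hN]
    constructor <;> linarith [neg_le_of_abs_le hru, le_of_abs_le hru]
  · rw [ZMod.val_intCast, Int.emod_add_mul_ediv]

end Extremal

lemma exists_prime_ge_injOn_intCast (N : ℕ) (X : Finset ℤ) :
    ∃ P : ℕ, P.Prime ∧ N ≤ P ∧ Set.InjOn (Int.cast : ℤ → ZMod P) X := by
  obtain ⟨P, hP, hprime⟩ := Nat.exists_infinite_primes (N + 2 * X.sup Int.natAbs + 1)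
  refine ⟨P, hprime, by lia, fun x hx y hy hxy ↦ ?_⟩
  have hxX : x.natAbs ≤ X.sup Int.natAbs := le_sup (f := Int.natAbs) hx
  have hyX : y.natAbs ≤ X.sup Int.natAbs := le_sup (f := Int.natAbs) hy
  have hsub : y - x = 0 := by
    refine Int.eq_zero_of_abs_lt_dvd ((ZMod.intCast_eq_intCast_iff_dvd_sub ..).1 hxy) ?_
    rw [Int.abs_eq_natAbs]
    lia
  lia

lemma exists_add_eq_univ_card_le_log {N : ℕ} [NeZero N] (hN : 2 ≤ N) {S : Finset (ZMod N)}
    (hS : N ≤ 4 * #S) : ∃ T, T + S = univ ∧ (#T : ℝ) ≤ 6 * Real.log N := by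
  obtain ⟨T, hT, hcard⟩ := exists_add_eq_univ (S := S) (card_pos.1 (by lia))
  refine ⟨T, hT, hcard.trans ?_⟩
  rw [ZMod.card]
  have hN₀ : (0 : ℝ) < N := by exact_mod_cast NeZero.pos N
  have hdens : (1 / 4 : ℝ) ≤ S.dens := by
    rw [nnratCast_dens, ZMod.card, div_le_div_iff₀ four_pos hN₀]
    exact_mod_cast (by lia : 1 * N ≤ #S * 4)
  have hlog : 1 / 2 ≤ Real.log N := by
    have : Real.log 2 ≤ Real.log N := Real.log_le_log two_pos (by exact_mod_cast hN)
    linarith [Real.log_two_gt_d9]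
  calc Real.log N / S.dens + 1 ≤ Real.log N / (1 / 4) + 1 := by gcongr
    _ ≤ 6 * Real.log N := by linarith

theorem ContainsPatterns.GU_le {U B X : Finset ℤ} (h : ContainsPatterns U B X) {K : ℕ}
    (hU : ∀ u ∈ U, |u| ≤ K) {N : ℕ} (hN : 2 ≤ N) (hX : #X = N) :
    (GU U N : ℝ) ≤ 24 * (K + 1) ^ 2 * Real.log N * #B := by
  have : NeZero N := ⟨by lia⟩
  obtain ⟨P, hprime, hNP, hinj⟩ := exists_prime_ge_injOn_intCast N X
  have : Fact P.Prime := ⟨hprime⟩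
  set f := Int.castRingHom (ZMod P)
  have hfX : #(X.image f) = N := (card_image_of_injOn hinj).trans hX
  obtain ⟨l, hl⟩ := exists_card_le_four_mul_card_image_dilateMod hfX.le hNP
  obtain ⟨T, hT, hTcard⟩ := exists_add_eq_univ_card_le_log hN (hfX.symm.trans_le hl)
  set E : Finset (ZMod N) := (Icc (-K : ℤ) K).image fun j ↦ ((j * P : ℤ) : ZMod N)
  have hE : #E ≤ 2 * K + 1 := card_image_le.trans_eq (by rw [Int.card_Icc]; lia)
  have hpatterns : ContainsPatterns U (T + ((B.image f).image (dilateMod N l) + E)) univ :=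
    hT ▸ ((h.image f).image_dilateMod hU N l).add_left T
  have hcard : #(T + ((B.image f).image (dilateMod N l) + E)) ≤ #T * (#B * (2 * K + 1)) :=
    card_add_le.trans <| Nat.mul_le_mul_left _ <| card_add_le.trans <|
      Nat.mul_le_mul (card_image_le.trans card_image_le) hE
  have hGU : GU U N ≤ #T * (#B * (2 * K + 1)) * (2 * K + 2) :=
    (GU_le_mul_card_of_containsPatterns_univ hU hpatterns).trans (Nat.mul_le_mul_right _ hcard)
  calc (GU U N : ℝ) ≤ #T * (#B * (2 * K + 1)) * (2 * K + 2) := by exact_mod_cast hGU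
    _ ≤ 6 * Real.log N * (#B * (2 * K + 2)) * (2 * K + 2) := by gcongr; exact one_le_two
    _ = 24 * (K + 1) ^ 2 * Real.log N * #B := by ring

theorem stmt1_general :
    ∃ C : ℝ, 0 < C ∧
      ∀ (U : Finset ℤ) (K : ℕ), (∀ u ∈ U, |u| ≤ K) →
        ∀ N : ℕ, 2 ≤ N →
          G'U U N ≤ GU U N ∧
          (GU U N : ℝ) ≤ C * ((K : ℝ) + 1) ^ 2 * Real.log N * G'U U N := by
  refine ⟨24, by norm_num, fun U K hU N hN ↦ ⟨G'U_le_GU U N, ?_⟩⟩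
  obtain ⟨B, X, hB, hX, hpatterns⟩ := exists_card_eq_G'U U N
  exact hB ▸ hpatterns.GU_le hU hN hX

/-- There is an absolute constant `C > 0` such that for every nonempty finite set `U` of
positive integers (with maximum `u_k`) and every `N ≥ 2`,
`G'_U(N) ≤ G_U(N) ≤ C·(u_k + 1)²·(log N)·G'_U(N)`. -/
theorem stmt1 :
    ∃ C : ℝ, 0 < C ∧
      ∀ U : Finset ℤ, ∀ hU : U.Nonempty, (∀ u ∈ U, 0 < u) →
        ∀ N : ℕ, 2 ≤ N →
          G'U U N ≤ GU U N ∧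
          (GU U N : ℝ) ≤ C * ((U.max' hU : ℝ) + 1) ^ 2 * Real.log N * G'U U N := by
  obtain ⟨C, hC, h⟩ := stmt1_general
  refine ⟨C, hC, fun U hU hpos N hN ↦ ?_⟩
  obtain ⟨K, hK⟩ := Int.eq_ofNat_of_zero_le (hpos _ (U.max'_mem hU)).le
  have hbound : ∀ u ∈ U, |u| ≤ K := fun u hu ↦ by
    rw [abs_of_pos (hpos u hu), ← hK]
    exact U.le_max' u hu
  simpa only [hK, Int.cast_natCast] using h U K hbound N hN
end

section
/- Let N ≥ 1, let S ⊆ ℤ be a set of N distinct integers, let r : S → ℤ be any function, and let B ⊆ ℤ be a finite set such that {x + 3·r(x), x + 4·r(x), x + 6·r(x)} ⊆ B for every x ∈ S. Then |B| ≥ N^{6/11}. -/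
/-!
Put `a x = 2 (x + 3 r x)` and `b x = x + 6 r x`. Then `a + b = 3 (x + 4 r x)` while `a - b = x`, so
`a`, `b` and `a + b` each take at most `|B|` values on `S`, and `a - b` is injective there. The
bound is thus an instance of the Katz–Tao sums–differences inequality with exponent `11/6`.

To prove the latter, let `a`, `b` and `a + b` map `S` into `A`, `B` and `C`, and let `V` be the set
of pairs of elements of `S` with equal `a + b`; by Cauchy–Schwarz `|S|² ≤ |C| |V|`. Consider the
chains `v₀, v₁, v₂, v₃` in `V` where `v₀, v₁` agree under `a × a`, `v₁, v₂` under `b × b`, and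
`v₂, v₃` under `a × b`. By Hölder there are at least `|V|⁴ / (|A|² · |B|² · |A| |B|)` of them. On
the other hand, a chain is determined by `v₀`, one value of `a` and one value of `b`, so there are
at most `|V| |A| |B|`. Hence `|V|³ ≤ |A|⁴ |B|⁴` and `|S|⁶ ≤ |A|⁴ |B|⁴ |C|³`.
-/

open Finset

section Collisions

variable {α β γ δ R : Type*} [DecidableEq β] [DecidableEq γ] [DecidableEq δ]

/-- The pairs of elements of `V` with the same image under `f`, including the diagonal ones. -/
def collisions (f : α → β) (V : Finset α) : Finset (α × α) :=
  {p ∈ V ×ˢ V | f p.1 = f p.2}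

/-- The chains `v₀, v₁, v₂, v₃` in `V` with `f v₀ = f v₁`, `g v₁ = g v₂` and `h v₂ = h v₃`, each
encoded as its middle pair `(v₁, v₂)` followed by its pair of ends `(v₀, v₃)`. -/
def collisionChains (f : α → β) (g : α → γ) (h : α → δ) (V : Finset α) :
    Finset (Σ _ : α × α, α × α) :=
  (collisions g V).sigma fun p ↦ {u ∈ V | f u = f p.1} ×ˢ {v ∈ V | h v = h p.2}

theorem mem_collisions {f : α → β} {V : Finset α} {p : α × α} :
    p ∈ collisions f V ↔ (p.1 ∈ V ∧ p.2 ∈ V) ∧ f p.1 = f p.2 := by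
  simp only [collisions, mem_filter, mem_product]

theorem mem_collisionChains {f : α → β} {g : α → γ} {h : α → δ} {V : Finset α}
    {t : Σ _ : α × α, α × α} :
    t ∈ collisionChains f g h V ↔
      t.1 ∈ collisions g V ∧ (t.2.1 ∈ V ∧ f t.2.1 = f t.1.1) ∧ t.2.2 ∈ V ∧ h t.2.2 = h t.1.2 := by
  simp only [collisionChains, mem_sigma, mem_product, mem_filter]

theorem card_collisionChains (f : α → β) (g : α → γ) (h : α → δ) (V : Finset α) :
    #(collisionChains f g h V) =
      ∑ p ∈ collisions g V, #{u ∈ V | f u = f p.1} * #{v ∈ V | h v = h p.2} := by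
  simp only [collisionChains, card_sigma, card_product]

theorem sum_collisions_mul [CommSemiring R] {f : α → β} {V : Finset α} {C : Finset β}
    (hf : Set.MapsTo f V C) (a b : α → R) :
    ∑ p ∈ collisions f V, a p.1 * b p.2 =
      ∑ y ∈ C, (∑ u ∈ V with f u = y, a u) * ∑ v ∈ V with f v = y, b v := by
  have maps : ∀ p ∈ collisions f V, f p.1 ∈ C := fun p hp ↦ hf (mem_collisions.1 hp).1.1
  rw [← sum_fiberwise_of_maps_to maps]
  refine sum_congr rfl fun y _ ↦ ?_
  have fiber_eq : {p ∈ collisions f V | f p.1 = y} =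
      {u ∈ V | f u = y} ×ˢ {v ∈ V | f v = y} := by
    ext p
    simp only [mem_filter, mem_collisions, mem_product]
    grind
  rw [fiber_eq, sum_product, sum_mul_sum]

theorem sq_sum_le_card_mul_sum_collisions [CommRing R] [LinearOrder R]
    [IsStrictOrderedRing R] {f : α → β} {V : Finset α} {C : Finset β}
    (hf : Set.MapsTo f V C) {w a b : α → R} (ha : ∀ v ∈ V, 0 ≤ a v) (hb : ∀ v ∈ V, 0 ≤ b v)
    (hw : ∀ v ∈ V, w v ^ 2 ≤ a v * b v) :
    (∑ v ∈ V, w v) ^ 2 ≤ #C * ∑ p ∈ collisions f V, a p.1 * b p.2 := by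
  rw [sum_collisions_mul hf, ← sum_fiberwise_of_maps_to hf]
  refine sq_sum_le_card_mul_sum_sq.trans ?_
  gcongr with y _
  exact sum_sq_le_sum_mul_sum_of_sq_le_mul _ (fun v hv ↦ ha v (mem_of_mem_filter v hv))
    (fun v hv ↦ hb v (mem_of_mem_filter v hv)) (fun v hv ↦ hw v (mem_of_mem_filter v hv))

theorem card_sq_le_card_mul_card_collisions {f : α → β} {V : Finset α} {C : Finset β}
    (hf : Set.MapsTo f V C) : #V ^ 2 ≤ #C * #(collisions f V) := by
  have := sq_sum_le_card_mul_sum_collisions hf (w := fun _ ↦ (1 : ℤ)) (a := fun _ ↦ 1)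
    (b := fun _ ↦ 1) (by simp) (by simp) (by simp)
  simp only [sum_const, nsmul_eq_mul, mul_one] at this
  exact_mod_cast this

theorem sum_inv_card_fiber_le [Field R] [LinearOrder R] [IsStrictOrderedRing R] {f : α → β}
    {V : Finset α} {C : Finset β} (hf : Set.MapsTo f V C) :
    ∑ v ∈ V, (#{u ∈ V | f u = f v} : R)⁻¹ ≤ #C := by
  rw [← sum_fiberwise_of_maps_to hf, ← nsmul_one]
  refine sum_le_card_nsmul C _ 1 fun y _ ↦ ?_
  calc ∑ v ∈ V with f v = y, (#{u ∈ V | f u = f v} : R)⁻¹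
      = ∑ v ∈ V with f v = y, (#{u ∈ V | f u = y} : R)⁻¹ :=
        sum_congr rfl fun v hv ↦ by rw [(mem_filter.1 hv).2]
    _ ≤ 1 := by
        rw [sum_const, nsmul_eq_mul]
        exact mul_inv_le_one

theorem card_sq_le_sum_mul_sum_inv [Field R] [LinearOrder R] [IsStrictOrderedRing R]
    {V : Finset α} {w : α → R} (hw : ∀ v ∈ V, 0 < w v) :
    (#V : R) ^ 2 ≤ (∑ v ∈ V, w v) * ∑ v ∈ V, (w v)⁻¹ := by
  simpa using sum_sq_le_sum_mul_sum_of_sq_le_mul V (r := fun _ ↦ (1 : R))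
    (fun v hv ↦ (hw v hv).le) (fun v hv ↦ (inv_pos.2 (hw v hv)).le)
    (fun v hv ↦ by rw [one_pow, mul_inv_cancel₀ (hw v hv).ne'])

theorem card_pow_four_le_sq_sum_mul_sum_inv [Field R] [LinearOrder R] [IsStrictOrderedRing R]
    {V : Finset α} {w d e : α → R} (hw : ∀ v ∈ V, 0 < w v) (hd : ∀ v ∈ V, 0 < d v)
    (he : ∀ v ∈ V, 0 < e v) (hde : ∀ v ∈ V, d v * e v ≤ w v ^ 2) :
    (#V : R) ^ 4 ≤ (∑ v ∈ V, w v) ^ 2 * ((∑ v ∈ V, (d v)⁻¹) * ∑ v ∈ V, (e v)⁻¹) := by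
  have sum_inv_sq : (∑ v ∈ V, (w v)⁻¹) ^ 2 ≤ (∑ v ∈ V, (d v)⁻¹) * ∑ v ∈ V, (e v)⁻¹ := by
    refine sum_sq_le_sum_mul_sum_of_sq_le_mul V (fun v hv ↦ (inv_pos.2 (hd v hv)).le)
      (fun v hv ↦ (inv_pos.2 (he v hv)).le) fun v hv ↦ ?_
    rw [inv_pow, ← mul_inv]
    exact inv_anti₀ (mul_pos (hd v hv) (he v hv)) (hde v hv)
  calc (#V : R) ^ 4 = (#V ^ 2) ^ 2 := by ring
    _ ≤ ((∑ v ∈ V, w v) * ∑ v ∈ V, (w v)⁻¹) ^ 2 :=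
        pow_le_pow_left₀ (sq_nonneg _) (card_sq_le_sum_mul_sum_inv hw) 2
    _ = (∑ v ∈ V, w v) ^ 2 * (∑ v ∈ V, (w v)⁻¹) ^ 2 := mul_pow ..
    _ ≤ (∑ v ∈ V, w v) ^ 2 * ((∑ v ∈ V, (d v)⁻¹) * ∑ v ∈ V, (e v)⁻¹) :=
        mul_le_mul_of_nonneg_left sum_inv_sq (sq_nonneg _)

theorem card_pow_four_le_card_collisionChains {f : α → β} {g : α → γ} {h : α → δ}
    {V : Finset α} {A : Finset β} {C : Finset γ} {D : Finset δ} (hf : Set.MapsTo f V A)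
    (hg : Set.MapsTo g V C) (hh : Set.MapsTo h V D) :
    #V ^ 4 ≤ #A * #C * #D * #(collisionChains f g h V) := by
  let d (v : α) : ℝ := #{u ∈ V | f u = f v}
  let e (v : α) : ℝ := #{u ∈ V | h u = h v}
  let w (v : α) : ℝ := √(d v * e v)
  have d_pos : ∀ v ∈ V, 0 < d v := fun v hv ↦
    Nat.cast_pos.2 (card_pos.2 ⟨v, mem_filter.2 ⟨hv, rfl⟩⟩)
  have e_pos : ∀ v ∈ V, 0 < e v := fun v hv ↦
    Nat.cast_pos.2 (card_pos.2 ⟨v, mem_filter.2 ⟨hv, rfl⟩⟩)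
  have w_pos : ∀ v ∈ V, 0 < w v := fun v hv ↦ Real.sqrt_pos.2 (mul_pos (d_pos v hv) (e_pos v hv))
  have w_sq : ∀ v ∈ V, w v ^ 2 = d v * e v := fun v hv ↦
    Real.sq_sqrt (mul_pos (d_pos v hv) (e_pos v hv)).le
  have sq_sum_w : (∑ v ∈ V, w v) ^ 2 ≤ #C * (#(collisionChains f g h V) : ℝ) := by
    rw [card_collisionChains]
    push_cast
    exact sq_sum_le_card_mul_sum_collisions hg (fun v hv ↦ (d_pos v hv).le)
      (fun v hv ↦ (e_pos v hv).le) (fun v hv ↦ (w_sq v hv).le)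
  have sum_inv_mul : (∑ v ∈ V, (d v)⁻¹) * ∑ v ∈ V, (e v)⁻¹ ≤ #A * (#D : ℝ) :=
    mul_le_mul (sum_inv_card_fiber_le hf) (sum_inv_card_fiber_le hh)
      (sum_nonneg fun v hv ↦ (inv_pos.2 (e_pos v hv)).le) (Nat.cast_nonneg _)
  have : (#V : ℝ) ^ 4 ≤ #A * #C * #D * #(collisionChains f g h V) :=
    calc (#V : ℝ) ^ 4 ≤ (∑ v ∈ V, w v) ^ 2 * ((∑ v ∈ V, (d v)⁻¹) * ∑ v ∈ V, (e v)⁻¹) :=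
          card_pow_four_le_sq_sum_mul_sum_inv w_pos d_pos e_pos fun v hv ↦ (w_sq v hv).ge
      _ ≤ (∑ v ∈ V, w v) ^ 2 * (#A * #D) :=
          mul_le_mul_of_nonneg_left sum_inv_mul (sq_nonneg _)
      _ ≤ (#C * #(collisionChains f g h V)) * (#A * #D) :=
          mul_le_mul_of_nonneg_right sq_sum_w (by positivity)
      _ = #A * #C * #D * #(collisionChains f g h V) := by ring
  exact_mod_cast this

end Collisions

section SumsDifferences

variable {ι H : Type*} [AddCommGroup H]

theorem sub_eq_of_add_eq_add {a₀ a₀' a₂ a₂' a₃' b₂ b₂' b₃ : H} (h₁ : a₀ + b₂ = a₀' + b₂')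
    (h₂ : a₂ + b₂ = a₂' + b₂') (h₃ : a₂ + b₃ = a₃' + b₂') :
    a₂' - b₂' = a₀' - a₀ + a₃' - b₃ := by
  linear_combination (norm := module) h₁ - h₂ + h₃

variable [DecidableEq H]

/-- The chains `v₀, v₁, v₂, v₃` of pairs with equal `a + b` where `v₀, v₁` agree under `a × a`,
`v₁, v₂` under `b × b`, and `v₂, v₃` under `a × b`; counting them in two ways bounds the number of
such pairs. -/
def sumChains (a b : ι → H) (S : Finset ι) :
    Finset (Σ _ : (ι × ι) × (ι × ι), (ι × ι) × (ι × ι)) :=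
  collisionChains (Prod.map a a) (Prod.map b b) (Prod.map a b) (collisions (a + b) S)

theorem injOn_sumChains {a b : ι → H} {S : Finset ι} (hsub : Set.InjOn (a - b) S) :
    Set.InjOn
      (fun t : Σ _ : (ι × ι) × (ι × ι), (ι × ι) × (ι × ι) ↦ (t.2.1, b t.2.2.1, a t.2.2.2))
      (sumChains a b S) := by
  have eq_of_eq : ∀ x ∈ S, ∀ y ∈ S, a x = a y → b x = b y → x = y :=
    fun x hx y hy ha hb ↦ hsub hx hy (by rw [Pi.sub_apply, Pi.sub_apply, ha, hb])
  rintro ⟨⟨⟨x₁, y₁⟩, x₂, y₂⟩, ⟨x₀, y₀⟩, x₃, y₃⟩ ht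
    ⟨⟨⟨x₁', y₁'⟩, x₂', y₂'⟩, ⟨x₀', y₀'⟩, x₃', y₃'⟩ ht' heq
  simp only [sumChains, mem_coe, mem_collisionChains, mem_collisions, Prod.map_apply, Prod.mk.injEq,
    Pi.add_apply] at ht ht' heq
  obtain ⟨⟨rfl, rfl⟩, hb₃, ha₃⟩ := heq
  have sub_y₂ : a y₂ - b y₂ = a y₀ - a x₀ + a y₃ - b x₃ := by
    apply sub_eq_of_add_eq_add (a₂ := a x₂) (b₂ := b x₂) <;> grind
  have sub_y₂' : a y₂' - b y₂' = a y₀ - a x₀ + a y₃' - b x₃' := by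
    apply sub_eq_of_add_eq_add (a₂ := a x₂') (b₂ := b x₂') <;> grind
  obtain rfl : y₂ = y₂' := hsub (by grind) (by grind) <| by
    rw [Pi.sub_apply, Pi.sub_apply, sub_y₂, sub_y₂', hb₃, ha₃]
  have a_x₂ : a x₂ = a x₂' := by grind
  have b_x₂ : b x₂ = b x₂' := by grind
  obtain rfl : x₂ = x₂' := eq_of_eq _ (by grind) _ (by grind) a_x₂ b_x₂
  -- Each remaining entry agrees with one known entry under `a` and with another under `b`.
  obtain rfl : x₁ = x₁' := by apply eq_of_eq <;> grind
  obtain rfl : y₁ = y₁' := by apply eq_of_eq <;> grind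
  obtain rfl : x₃ = x₃' := by apply eq_of_eq <;> grind
  obtain rfl : y₃ = y₃' := by apply eq_of_eq <;> grind
  rfl

theorem card_sumChains_le {a b : ι → H} {S : Finset ι} {A B : Finset H} (ha : Set.MapsTo a S A)
    (hb : Set.MapsTo b S B) (hsub : Set.InjOn (a - b) S) :
    #(sumChains a b S) ≤ #(collisions (a + b) S) * (#B * #A) := by
  rw [← card_product, ← card_product]
  refine card_le_card_of_injOn _ (fun t ht ↦ ?_) (injOn_sumChains hsub)
  obtain ⟨-, ⟨hv₀, -⟩, hv₃, -⟩ := mem_collisionChains.1 ht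
  obtain ⟨⟨hx₃, hy₃⟩, -⟩ := mem_collisions.1 hv₃
  exact mem_product.2 ⟨hv₀, mem_product.2 ⟨hb hx₃, ha hy₃⟩⟩

theorem card_collisions_add_pow_three_le {a b : ι → H} {S : Finset ι} {A B : Finset H}
    (ha : Set.MapsTo a S A) (hb : Set.MapsTo b S B) (hsub : Set.InjOn (a - b) S) :
    #(collisions (a + b) S) ^ 3 ≤ #A ^ 4 * #B ^ 4 := by
  set V := collisions (a + b) S
  have mapsTo {f g : ι → H} {F G : Finset H} (hf : Set.MapsTo f S F) (hg : Set.MapsTo g S G) :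
      Set.MapsTo (Prod.map f g) V (F ×ˢ G : Finset (H × H)) := fun p hp ↦
    have hp := (mem_collisions.1 hp).1
    mem_product.2 ⟨hf hp.1, hg hp.2⟩
  obtain hV₀ | hV₀ := (#V).eq_zero_or_pos
  · simp [hV₀]
  refine Nat.le_of_mul_le_mul_left ?_ hV₀
  calc #V * #V ^ 3 = #V ^ 4 := by ring
    _ ≤ #(A ×ˢ A) * #(B ×ˢ B) * #(A ×ˢ B) * #(sumChains a b S) :=
        card_pow_four_le_card_collisionChains (mapsTo ha ha) (mapsTo hb hb) (mapsTo ha hb)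
    _ ≤ #(A ×ˢ A) * #(B ×ˢ B) * #(A ×ˢ B) * (#V * (#B * #A)) := by
        gcongr
        exact card_sumChains_le ha hb hsub
    _ = #V * (#A ^ 4 * #B ^ 4) := by
        simp only [card_product]
        ring

end SumsDifferences

theorem card_pow_six_le_of_injOn_sub {ι H : Type*} [AddCommGroup H] {a b : ι → H} {S : Finset ι}
    {A B C : Finset H} (ha : Set.MapsTo a S A) (hb : Set.MapsTo b S B)
    (hadd : Set.MapsTo (a + b) S C) (hsub : Set.InjOn (a - b) S) :
    #S ^ 6 ≤ #A ^ 4 * #B ^ 4 * #C ^ 3 := by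
  classical
  calc #S ^ 6 = (#S ^ 2) ^ 3 := by ring
    _ ≤ (#C * #(collisions (a + b) S)) ^ 3 := by
        gcongr
        exact card_sq_le_card_mul_card_collisions hadd
    _ = #(collisions (a + b) S) ^ 3 * #C ^ 3 := by ring
    _ ≤ #A ^ 4 * #B ^ 4 * #C ^ 3 := by
        gcongr
        exact card_collisions_add_pow_three_le ha hb hsub

theorem card_pow_six_le_of_pattern {G : Type*} [AddCommGroup G] {S B : Finset G} {r : G → G}
    (hB : ∀ x ∈ S, x + 3 • r x ∈ B ∧ x + 4 • r x ∈ B ∧ x + 6 • r x ∈ B) :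
    #S ^ 6 ≤ #B ^ 11 := by
  classical
  let a (x : G) : G := 2 • (x + 3 • r x)
  let b (x : G) : G := x + 6 • r x
  have ha : Set.MapsTo a S (B.image (2 • ·)) := fun x hx ↦ mem_image_of_mem _ (hB x hx).1
  have hb : Set.MapsTo b S B := fun x hx ↦ (hB x hx).2.2
  have hadd : Set.MapsTo (a + b) S (B.image (3 • ·)) := fun x hx ↦
    mem_image.2 ⟨_, (hB x hx).2.1, by simp only [a, b, Pi.add_apply]; module⟩
  have sub_eq_id : a - b = id := by
    ext x
    simp only [a, b, Pi.sub_apply, id]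
    module
  calc #S ^ 6 ≤ #(B.image (2 • ·)) ^ 4 * #B ^ 4 * #(B.image (3 • ·)) ^ 3 :=
        card_pow_six_le_of_injOn_sub ha hb hadd (sub_eq_id ▸ Set.injOn_id _)
    _ ≤ #B ^ 4 * #B ^ 4 * #B ^ 3 := by gcongr ?_ ^ 4 * _ * ?_ ^ 3 <;> exact card_image_le
    _ = #B ^ 11 := by ring

theorem stmt3_general {G : Type*} [AddCommGroup G] (S B : Finset G) (r : G → G)
    (hB : ∀ x ∈ S, x + 3 • r x ∈ B ∧ x + 4 • r x ∈ B ∧ x + 6 • r x ∈ B) :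
    (#S : ℝ) ^ ((6 : ℝ) / 11) ≤ #B := by
  have pow_le : (#S : ℝ) ^ (6 : ℝ) ≤ (#B : ℝ) ^ (11 : ℝ) := by
    exact_mod_cast card_pow_six_le_of_pattern hB
  rw [div_eq_mul_inv, Real.rpow_mul (Nat.cast_nonneg _)]
  exact (Real.rpow_inv_le_iff_of_pos (by positivity) (by positivity) (by norm_num)).2 pow_le

/-- If `B ⊆ ℤ` contains the `{3,4,6}`-pattern `{x + 3r(x), x + 4r(x), x + 6r(x)}` for each
of `N` distinct integer basepoints `x`, then `|B| ≥ N^{6/11}`. -/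
theorem stmt3 (N : ℕ) (hN : 1 ≤ N) (S : Finset ℤ) (hS : S.card = N)
    (r : ℤ → ℤ) (B : Finset ℤ)
    (hB : ∀ x ∈ S, x + 3 * r x ∈ B ∧ x + 4 * r x ∈ B ∧ x + 6 * r x ∈ B) :
    (N : ℝ) ^ ((6 : ℝ) / 11) ≤ B.card :=
  hS ▸ stmt3_general S B r (by simpa using hB)
end

section
/- Let p ≥ 2 and q ≥ 1 be integers such that p + 1 divides 2pq. Let N ≥ 1, let S ⊆ ℤ be a set of N distinct integers, let r : S → ℤ be any function, and let B ⊆ ℤ be a finite set such that {x + r(x)·pq, x + r(x)·q, x + r(x)·(2pq/(p+1))} ⊆ B for every x ∈ S. Then |B| ≥ N^{6/11}. -/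
/-!
With `a(x) = x + r(x) p q` and `b(x) = p (x + r(x) q)` one has
`a(x) + b(x) = (p + 1) (x + r(x) · 2pq/(p+1))` and `a(x) - b(x) = (1 - p) x`. So the pairs
`(a(x), b(x))` form a set `G` with `|S|` elements, on which the difference is injective and whose
two coordinates and their sum take at most `|B|` values each. The sums-differences argument of Katz
and Tao bounds such a set: let `V` be the set of pairs of elements of `G` with a common first
coordinate, so that `|G| ^ 2 ≤ |B| |V|`. On the one hand the number of chains `v₀, v₁, v₂, v₃` in
`V` whose consecutive terms agree under suitable maps to sets of size at most `|B| ^ 2` is at least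
`|V| ^ 4 / |B| ^ 6`, by the inequality of arithmetic and geometric means. On the other hand a chain
is determined by `v₀` and two elements of sets of size at most `|B|`. Hence `|V| ^ 3 ≤ |B| ^ 8`
and `|G| ^ 6 ≤ |B| ^ 11`.
-/

open Finset

section Chains

variable {α β : Type*}

lemma card_pow_card_mul_prod_le_sum_pow_card (s : Finset α) {z : α → ℝ} (hz : ∀ i ∈ s, 0 ≤ z i) :
    (#s : ℝ) ^ #s * ∏ i ∈ s, z i ≤ (∑ i ∈ s, z i) ^ #s := by
  rcases s.eq_empty_or_nonempty with rfl | hs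
  · simp
  have card_pos : (0 : ℝ) < #s := by exact_mod_cast hs.card_pos
  have am_gm : (∏ i ∈ s, z i) ^ (#s : ℝ)⁻¹ ≤ (∑ i ∈ s, z i) / #s := by
    simpa using Real.geom_mean_le_arith_mean s (fun _ ↦ 1) z (by simp) (by simpa using card_pos) hz
  calc (#s : ℝ) ^ #s * ∏ i ∈ s, z i
      = (#s * (∏ i ∈ s, z i) ^ (#s : ℝ)⁻¹) ^ #s := by
        rw [mul_pow, Real.rpow_inv_natCast_pow (prod_nonneg hz) hs.card_ne_zero]
    _ ≤ (∑ i ∈ s, z i) ^ #s := by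
        have := Real.rpow_nonneg (prod_nonneg hz) (#s : ℝ)⁻¹
        gcongr
        rwa [mul_comm, ← le_div_iff₀ card_pos]

variable [DecidableEq β]

lemma sum_fiber_pos {M : Type*} [AddCommMonoid M] [PartialOrder M] [IsOrderedCancelAddMonoid M]
    {s : Finset α} (f : α → β) {h : α → M} (hh : ∀ v ∈ s, 0 < h v) {v : α} (hv : v ∈ s) :
    0 < ∑ w ∈ s with f w = f v, h w :=
  sum_pos (fun w hw ↦ hh w (mem_filter.1 hw).1) ⟨v, mem_filter.2 ⟨hv, rfl⟩⟩

lemma sum_div_sum_fiber_eq_card_image {K : Type*} [Field K] [LinearOrder K] [IsStrictOrderedRing K]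
    (s : Finset α) (f : α → β) {h : α → K} (hh : ∀ v ∈ s, 0 < h v) :
    ∑ v ∈ s, h v / ∑ w ∈ s with f w = f v, h w = #(s.image f) := by
  have fiber_sum_eq_one : ∀ v ∈ s,
      (1 : K) = ∑ u ∈ s with f u = f v, h u / ∑ w ∈ s with f w = f u, h w := by
    intro v hv
    calc (1 : K) = ∑ u ∈ s with f u = f v, h u / ∑ w ∈ s with f w = f v, h w := by
          rw [← sum_div, div_self (sum_fiber_pos f hh hv).ne']
      _ = _ := sum_congr rfl fun u hu ↦ by rw [(mem_filter.1 hu).2]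
  rw [← sum_image' (f := fun _ ↦ (1 : K)) _ fiber_sum_eq_one]
  simp

lemma card_pow_card_mul_prod_le_card_image_pow_mul_prod_sum_fiber (s : Finset α) (f : α → β)
    {h : α → ℝ} (hh : ∀ v ∈ s, 0 < h v) :
    (#s : ℝ) ^ #s * ∏ v ∈ s, h v ≤
      (#(s.image f) : ℝ) ^ #s * ∏ v ∈ s, ∑ w ∈ s with f w = f v, h w := by
  have fiber_pos : ∀ v ∈ s, 0 < ∑ w ∈ s with f w = f v, h w := fun _ hv ↦ sum_fiber_pos f hh hv
  -- AM-GM for the ratios of `h` to its fibre sums, which add up to the number of fibres.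
  have am_gm := card_pow_card_mul_prod_le_sum_pow_card s
    fun v hv ↦ (div_pos (hh v hv) (fiber_pos v hv)).le
  rwa [sum_div_sum_fiber_eq_card_image s f hh, prod_div_distrib, ← mul_div_assoc,
    div_le_iff₀ (prod_pos fiber_pos)] at am_gm

/-- For `fs = [f₁, …, fₙ]`, the number of chains `v = v₀, v₁, …, vₙ` with `vᵢ ∈ s` and
`fᵢ vᵢ = fᵢ vᵢ₋₁` for all `i ≥ 1`. Only `v` itself is not required to lie in `s`. -/
def chainCount (s : Finset α) : List (α → β) → α → ℕ
  | [], _ => 1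
  | f :: fs, v => ∑ w ∈ s with f w = f v, chainCount s fs w

lemma chainCount_pos {s : Finset α} (fs : List (α → β)) {v : α} (hv : v ∈ s) :
    0 < chainCount s fs v := by
  induction fs generalizing v with
  | nil => exact one_pos
  | cons f fs ih => exact sum_fiber_pos f (fun _ hw ↦ ih hw) hv

lemma chainCount_three (s : Finset α) (f g k : α → β) (v : α) :
    chainCount s [f, g, k] v =
      #{t ∈ s ×ˢ s ×ˢ s | f t.1 = f v ∧ g t.2.1 = g t.1 ∧ k t.2.2 = k t.2.1} := by
  simp only [chainCount, card_filter, sum_product, sum_filter, ite_and, sum_ite_irrel,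
    sum_const_zero]

lemma card_pow_length_pow_card_le_prod_card_image_pow_mul_prod_chainCount (s : Finset α)
    (fs : List (α → β)) :
    ((#s : ℝ) ^ fs.length) ^ #s ≤
      ((fs.map fun f ↦ (#(s.image f) : ℝ)).prod) ^ #s * ∏ v ∈ s, (chainCount s fs v : ℝ) := by
  induction fs with
  | nil => simp [chainCount]
  | cons f fs ih =>
    have fiber_step := card_pow_card_mul_prod_le_card_image_pow_mul_prod_sum_fiber s f
      (h := fun v ↦ (chainCount s fs v : ℝ)) fun v hv ↦ by exact_mod_cast chainCount_pos fs hv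
    set P := (fs.map fun f ↦ (#(s.image f) : ℝ)).prod
    have P_nonneg : 0 ≤ P := List.prod_nonneg (by simp)
    calc ((#s : ℝ) ^ (fs.length + 1)) ^ #s
        = #s ^ #s * (#s ^ fs.length) ^ #s := by rw [pow_succ', mul_pow]
      _ ≤ #s ^ #s * (P ^ #s * ∏ v ∈ s, (chainCount s fs v : ℝ)) := by gcongr
      _ = P ^ #s * (#s ^ #s * ∏ v ∈ s, (chainCount s fs v : ℝ)) := by ring
      _ ≤ P ^ #s * (#(s.image f) ^ #s * ∏ v ∈ s, ∑ w ∈ s with f w = f v, (chainCount s fs w : ℝ)) :=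
        by gcongr
      _ = _ := by
        simp only [chainCount, List.map_cons, List.prod_cons, mul_pow, Nat.cast_sum]
        ring

theorem card_pow_length_succ_le_prod_card_image_mul_sum_chainCount (s : Finset α)
    (fs : List (α → β)) :
    #s ^ (fs.length + 1) ≤ (fs.map fun f ↦ #(s.image f)).prod * ∑ v ∈ s, chainCount s fs v := by
  rcases s.eq_empty_or_nonempty with rfl | hs
  · simp
  rw [← Nat.cast_le (α := ℝ)]
  push_cast [List.map_map]
  set P := (fs.map (Nat.cast ∘ fun f ↦ #(s.image f)) : List ℝ).prod
  have P_nonneg : 0 ≤ P := List.prod_nonneg (by simp)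
  refine le_of_pow_le_pow_left₀ hs.card_ne_zero (by positivity) ?_
  calc ((#s : ℝ) ^ (fs.length + 1)) ^ #s
      = #s ^ #s * (#s ^ fs.length) ^ #s := by rw [pow_succ', mul_pow]
    _ ≤ #s ^ #s * (P ^ #s * ∏ v ∈ s, (chainCount s fs v : ℝ)) := by
      gcongr
      exact card_pow_length_pow_card_le_prod_card_image_pow_mul_prod_chainCount s fs
    _ = P ^ #s * (#s ^ #s * ∏ v ∈ s, (chainCount s fs v : ℝ)) := by ring
    _ ≤ P ^ #s * (∑ v ∈ s, (chainCount s fs v : ℝ)) ^ #s := by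
      gcongr
      exact card_pow_card_mul_prod_le_sum_pow_card s fun v _ ↦ Nat.cast_nonneg _
    _ = (P * ∑ v ∈ s, (chainCount s fs v : ℝ)) ^ #s := (mul_pow ..).symm

end Chains

section SumsDifferences

variable {A : Type*} [DecidableEq A]

/-- The pairs of points of `G` that lie on a common vertical line, the pair `(a, b)`, `(a, b')`
being encoded as the triple `(a, b, b')`. The Katz–Tao argument counts chains in this set. -/
def verticalPairs (G : Finset (A × A)) : Finset (A × A × A) :=
  {z ∈ G ×ˢ G | z.2.1 = z.1.1}.image fun z ↦ (z.1.1, z.1.2, z.2.2)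

lemma mem_verticalPairs {G : Finset (A × A)} {a b b' : A} :
    (a, b, b') ∈ verticalPairs G ↔ (a, b) ∈ G ∧ (a, b') ∈ G := by
  simp only [verticalPairs, mem_image, mem_filter, mem_product, Prod.exists, Prod.mk.injEq]
  grind

lemma card_verticalPairs (G : Finset (A × A)) :
    #(verticalPairs G) = ∑ z ∈ G, chainCount G [Prod.fst] z := by
  rw [verticalPairs, card_image_of_injOn fun z hz w hw h ↦ by grind]
  simp only [chainCount, card_filter, sum_product, sum_filter]

lemma card_sq_le_card_image_fst_mul_card_verticalPairs (G : Finset (A × A)) :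
    #G ^ 2 ≤ #(G.image Prod.fst) * #(verticalPairs G) := by
  simpa [card_verticalPairs] using
    card_pow_length_succ_le_prod_card_image_mul_sum_chainCount G [Prod.fst]

lemma card_image_verticalPairs_le (G : Finset (A × A)) (f g : A × A → A) :
    #((verticalPairs G).image fun (a, b, b') ↦ (f (a, b), g (a, b'))) ≤
      #(G.image f) * #(G.image g) := by
  rw [← card_product]
  refine card_le_card (image_subset_iff.2 fun ⟨a, b, b'⟩ hv ↦ ?_)
  obtain ⟨hb, hb'⟩ := mem_verticalPairs.1 hv
  exact mem_product.2 ⟨mem_image_of_mem f hb, mem_image_of_mem g hb'⟩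

variable [AddCommGroup A]

/-- The maps linking the consecutive terms of a chain `v₀, v₁, v₂, v₃` of vertical pairs in the
Katz–Tao argument. -/
def katzTaoMaps (A : Type*) [Add A] : List (A × A × A → A × A) :=
  [fun (_, b, b') ↦ (b, b'), fun (a, b, b') ↦ (a + b, a + b'), fun (a, b, b') ↦ (b, a + b')]

lemma chainCount_katzTaoMaps_le {G : Finset (A × A)}
    (hG : Set.InjOn (fun z : A × A ↦ z.1 - z.2) G) (v₀ : A × A × A) :
    chainCount (verticalPairs G) (katzTaoMaps A) v₀ ≤
      #(G.image Prod.fst) * #(G.image Prod.snd) := by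
  obtain ⟨a₀, b₀, b₀'⟩ := v₀
  rw [katzTaoMaps, chainCount_three, ← card_product]
  -- A chain starting at `v₀` is determined by `a₂` and `b₃'`: these fix `a₃ - b₃`, hence by
  -- injectivity `a₃` and `b₃`, and the remaining entries follow.
  refine card_le_card_of_injOn (fun (_, v₂, v₃) ↦ (v₂.1, v₃.2.2)) ?_ ?_
  · rintro ⟨v₁, ⟨a₂, b₂, b₂'⟩, ⟨a₃, b₃, b₃'⟩⟩ hv
    simp only [coe_filter, mem_product, mem_verticalPairs, Set.mem_ofPred_eq] at hv
    obtain ⟨⟨-, ⟨hv₂, -⟩, -, hv₃⟩, -⟩ := hv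
    have ha₂ : a₂ ∈ G.image Prod.fst := mem_image_of_mem Prod.fst hv₂
    have hb₃' : b₃' ∈ G.image Prod.snd := mem_image_of_mem Prod.snd hv₃
    exact mem_coe.2 (mem_product.2 ⟨ha₂, hb₃'⟩)
  · rintro ⟨⟨a₁, b₁, b₁'⟩, ⟨a₂, b₂, b₂'⟩, ⟨a₃, b₃, b₃'⟩⟩ hv
      ⟨⟨c₁, d₁, d₁'⟩, ⟨c₂, d₂, d₂'⟩, ⟨c₃, d₃, d₃'⟩⟩ hw heq
    simp only [coe_filter, mem_product, mem_verticalPairs, Set.mem_ofPred_eq, Prod.mk.injEq]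
      at hv hw heq
    obtain ⟨⟨-, -, hv₃, -⟩, hv⟩ := hv
    obtain ⟨⟨-, -, hw₃, -⟩, hw⟩ := hw
    have sub_eq : a₃ - b₃ = c₃ - d₃ := calc
      a₃ - b₃ = a₂ + b₀' - b₀ - b₃' := by grind
      _ = c₃ - d₃ := by grind
    obtain ⟨rfl, rfl⟩ : a₃ = c₃ ∧ b₃ = d₃ := Prod.mk.inj (hG hv₃ hw₃ sub_eq)
    grind

theorem card_verticalPairs_pow_three_le {G : Finset (A × A)}
    (hG : Set.InjOn (fun z : A × A ↦ z.1 - z.2) G) :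
    #(verticalPairs G) ^ 3 ≤
      #(G.image Prod.fst) * #(G.image Prod.snd) ^ 4 * #(G.image fun z ↦ z.1 + z.2) ^ 3 := by
  set V := verticalPairs G
  set a := #(G.image Prod.fst)
  set b := #(G.image Prod.snd)
  set c := #(G.image fun z ↦ z.1 + z.2)
  rcases Nat.eq_zero_or_pos #V with hV | hV
  · simp [hV]
  have prod_card_image_le :
      ((katzTaoMaps A).map fun f ↦ #(V.image f)).prod ≤ b * b * (c * c * (b * c)) := by
    have card_image_le := card_image_verticalPairs_le G
    simpa only [katzTaoMaps, List.map_cons, List.map_nil, List.prod_cons, List.prod_nil, mul_one]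
      using Nat.mul_le_mul (card_image_le Prod.snd Prod.snd)
        (Nat.mul_le_mul (card_image_le (fun z ↦ z.1 + z.2) fun z ↦ z.1 + z.2)
          (card_image_le Prod.snd fun z ↦ z.1 + z.2))
  have sum_chainCount_le : ∑ v ∈ V, chainCount V (katzTaoMaps A) v ≤ #V * (a * b) := by
    simpa using sum_le_card_nsmul V _ _ fun v _ ↦ chainCount_katzTaoMaps_le hG v
  refine Nat.le_of_mul_le_mul_left ?_ hV
  calc #V * #V ^ 3 = #V ^ ((katzTaoMaps A).length + 1) := (pow_succ' ..).symm
    _ ≤ _ := card_pow_length_succ_le_prod_card_image_mul_sum_chainCount V (katzTaoMaps A)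
    _ ≤ b * b * (c * c * (b * c)) * (#V * (a * b)) := by gcongr
    _ = #V * (a * b ^ 4 * c ^ 3) := by ring

theorem card_pow_six_le_of_injOn_sub_s4 {G : Finset (A × A)}
    (hG : Set.InjOn (fun z : A × A ↦ z.1 - z.2) G) :
    #G ^ 6 ≤
      #(G.image Prod.fst) ^ 4 * #(G.image Prod.snd) ^ 4 * #(G.image fun z ↦ z.1 + z.2) ^ 3 := by
  set a := #(G.image Prod.fst)
  calc #G ^ 6 = (#G ^ 2) ^ 3 := by rw [← pow_mul]
    _ ≤ (a * #(verticalPairs G)) ^ 3 := by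
      gcongr
      exact card_sq_le_card_image_fst_mul_card_verticalPairs G
    _ = a ^ 3 * #(verticalPairs G) ^ 3 := mul_pow ..
    _ ≤ a ^ 3 * (a * #(G.image Prod.snd) ^ 4 * #(G.image fun z ↦ z.1 + z.2) ^ 3) := by
      gcongr
      exact card_verticalPairs_pow_three_le hG
    _ = _ := by ring

theorem card_pow_six_le_card_image_of_injOn_sub {ι : Type*} {S : Finset ι} {a b : ι → A}
    (hS : Set.InjOn (fun x ↦ a x - b x) S) :
    #S ^ 6 ≤ #(S.image a) ^ 4 * #(S.image b) ^ 4 * #(S.image fun x ↦ a x + b x) ^ 3 := by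
  have card_graph : #(S.image fun x ↦ (a x, b x)) = #S :=
    card_image_of_injOn fun x hx y hy hxy ↦ hS hx hy (congrArg (fun z ↦ z.1 - z.2) hxy)
  have sub_injOn : Set.InjOn (fun z : A × A ↦ z.1 - z.2) (S.image fun x ↦ (a x, b x)) := by
    rw [coe_image]
    exact hS.image_of_comp
  simpa only [card_graph, image_image, Function.comp_def] using
    card_pow_six_le_of_injOn_sub_s4 sub_injOn

end SumsDifferences

lemma rpow_div_le_of_pow_le_pow {x y : ℝ} (hx : 0 ≤ x) (hy : 0 ≤ y) {m n : ℕ} (hn : n ≠ 0)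
    (h : x ^ m ≤ y ^ n) : x ^ ((m : ℝ) / n) ≤ y := by
  calc x ^ ((m : ℝ) / n) = (x ^ m) ^ (n : ℝ)⁻¹ := by
        rw [div_eq_mul_inv, Real.rpow_mul hx, Real.rpow_natCast]
    _ ≤ (y ^ n) ^ (n : ℝ)⁻¹ := by gcongr
    _ = y := Real.pow_rpow_inv_natCast hy hn

theorem stmt4_general {R M : Type*} [Ring R] [AddCommGroup M] [Module R M] {p q m : R}
    (hm : (p + 1) * m = 2 * p * q) (hp : IsSMulRegular M (p - 1)) (S : Finset M) (r : M → M)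
    (B : Finset M)
    (hB : ∀ x ∈ S, x + (p * q) • r x ∈ B ∧ x + q • r x ∈ B ∧ x + m • r x ∈ B) :
    (#S : ℝ) ^ ((6 : ℝ) / 11) ≤ #B := by
  classical
  set a : M → M := fun x ↦ x + (p * q) • r x with ha
  set b : M → M := fun x ↦ p • (x + q • r x) with hb
  have sub_eq (x : M) : a x - b x = -((p - 1) • x) := by
    simp only [ha, hb, smul_add, mul_smul, sub_smul, one_smul]
    abel
  have add_eq (x : M) : a x + b x = (p + 1) • (x + m • r x) := by
    simp only [ha, hb, smul_add, smul_smul, hm, two_mul, add_mul, add_smul, one_smul]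
    abel
  have sub_injOn : Set.InjOn (fun x ↦ a x - b x) S := fun x _ y _ hxy ↦
    hp (neg_injective (by simpa only [sub_eq] using hxy))
  have card_a_le : #(S.image a) ≤ #B :=
    card_le_card (image_subset_iff.2 fun x hx ↦ (hB x hx).1)
  have card_b_le : #(S.image b) ≤ #B :=
    (card_le_card (image_subset_iff.2 fun x hx ↦ mem_image_of_mem (p • ·) (hB x hx).2.1)).trans
      card_image_le
  have card_add_le : #(S.image fun x ↦ a x + b x) ≤ #B := by
    simp only [add_eq]
    exact (card_le_card (image_subset_iff.2 fun x hx ↦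
      mem_image_of_mem ((p + 1) • ·) (hB x hx).2.2)).trans card_image_le
  have card_pow_le : #S ^ 6 ≤ #B ^ 11 := calc
    #S ^ 6 ≤ _ := card_pow_six_le_card_image_of_injOn_sub sub_injOn
    _ ≤ #B ^ 4 * #B ^ 4 * #B ^ 3 := by gcongr
    _ = #B ^ 11 := by ring
  exact_mod_cast rpow_div_le_of_pow_le_pow (m := 6) (n := 11) (Nat.cast_nonneg #S)
    (Nat.cast_nonneg #B) (by decide) (by exact_mod_cast card_pow_le)

/-- Let `p ≥ 2`, `q ≥ 1` be integers with `(p+1) ∣ 2pq`. If `B ⊆ ℤ` contains the pattern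
`{x + r(x)·pq, x + r(x)·q, x + r(x)·(2pq/(p+1))}` for each of `N` distinct integer
basepoints `x`, then `|B| ≥ N^{6/11}`. -/
theorem stmt4 (p q : ℤ) (hp : 2 ≤ p) (hq : 1 ≤ q) (hdvd : (p + 1) ∣ 2 * p * q)
    (N : ℕ) (hN : 1 ≤ N) (S : Finset ℤ) (hS : S.card = N)
    (r : ℤ → ℤ) (B : Finset ℤ)
    (hB : ∀ x ∈ S, x + r x * (p * q) ∈ B ∧ x + r x * q ∈ B ∧
      x + r x * (2 * p * q / (p + 1)) ∈ B) :
    (N : ℝ) ^ ((6 : ℝ) / 11) ≤ B.card := by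
  exact hS ▸ stmt4_general (Int.mul_ediv_cancel' hdvd) (.of_ne_zero (by lia)) S r B
    (by simpa only [smul_eq_mul, mul_comm (r _)] using hB)
end

section
/- For every integer n ≥ 1 and every nonempty finite set P ⊂ ℝ, one has f_n^M(P) = f_n^P(P). That is, the infimum of the Minkowski dimension over bounded sets B ⊆ ℝ^n that contain a P-pattern for every scaling factor r ∈ [0,1]^n equals the infimum of the packing dimension over (arbitrary) sets B ⊆ ℝ^n with the same property. -/
open Set Filter Bornology

/-- Covering number of `E` by open balls of radius `ε`. -/
noncomputable def covNum {X : Type*} [PseudoMetricSpace X] (E : Set X) (ε : ℝ) : ℕ∞ :=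
  ⨅ (t : Finset X) (_ : E ⊆ ⋃ x ∈ t, Metric.ball x ε), (t.card : ℕ∞)

/-- Upper Minkowski (box-counting) dimension. -/
noncomputable def dimM {X : Type*} [PseudoMetricSpace X] (E : Set X) : ℝ :=
  limsup (fun ε : ℝ => Real.log ((covNum E ε).toNat) / Real.log (1 / ε))
    (nhdsWithin 0 (Ioi 0))

/-- Packing dimension, as modified upper box dimension: the infimum of
`⨆ j, dimM (E j)` over countable covers of the set by bounded sets. -/
noncomputable def dimP {X : Type*} [PseudoMetricSpace X] (E : Set X) : ℝ :=
  sInf { a : ℝ | ∃ f : ℕ → Set X, (E ⊆ ⋃ j, f j) ∧ (∀ j, IsBounded (f j)) ∧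
    a = ⨆ j, dimM (f j) }

/-! Any bound above the packing dimension of `B` is a covering exponent of each piece of some
countable bounded cover of `B`, hence of the compact sets `E j` obtained as closures of the finite
unions of pieces. As `P` is finite, every scaling factor realised in `B` is realised in some `E j`,
and compactness makes the scaling factors realised in a single `E j` a closed set. By Baire one of
these closed sets contains a ball around some `r₀`. Since `x + p • (r₀ + δ • s)` becomes
`δ⁻¹ • x + p • s` after subtracting `p • r₀` and dividing by `δ`, finitely many similar copies of
that `E j` realise all scaling factors of any prescribed bounded set, and they keep its covering
exponent. -/

open Module
open scoped NNReal Topology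

section CoveringNumber

variable {X : Type*} [PseudoMetricSpace X] {E : Set X} {ε : ℝ}

theorem covNum_le_natCast_iff {N : ℕ} :
    covNum E ε ≤ N ↔ ∃ t : Finset X, E ⊆ ⋃ x ∈ t, Metric.ball x ε ∧ t.card ≤ N := by
  rw [← ENat.lt_add_one_iff (ENat.natCast_ne_top N), covNum]
  simp only [iInf_lt_iff, exists_prop]
  exact_mod_cast exists_congr fun t => and_congr_right fun _ => Nat.lt_succ_iff

theorem toNat_covNum_le_card {t : Finset X} (ht : E ⊆ ⋃ x ∈ t, Metric.ball x ε) :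
    (covNum E ε).toNat ≤ t.card :=
  ENat.toNat_le_of_le_natCast (covNum_le_natCast_iff.2 ⟨t, ht, le_rfl⟩)

theorem exists_cover_card_le_toNat_covNum {t : Finset X} (ht : E ⊆ ⋃ x ∈ t, Metric.ball x ε) :
    ∃ s : Finset X, E ⊆ ⋃ x ∈ s, Metric.ball x ε ∧ s.card ≤ (covNum E ε).toNat := by
  have hfin : covNum E ε ≠ ⊤ :=
    ne_top_of_le_ne_top (ENat.natCast_ne_top t.card) (covNum_le_natCast_iff.2 ⟨t, ht, le_rfl⟩)
  exact covNum_le_natCast_iff.1 (ENat.natCast_toNat hfin).ge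

/-- The quotient `log N(E, ε) / log (1 / ε)`, whose upper limit as `ε → 0⁺` is the Minkowski
dimension of `E`. -/
noncomputable def logCovRatio (E : Set X) (ε : ℝ) : ℝ :=
  Real.log ((covNum E ε).toNat) / Real.log (1 / ε)

theorem log_one_div_pos (hε : ε ∈ Ioo 0 1) : 0 < Real.log (1 / ε) :=
  Real.log_pos (one_lt_one_div hε.1 hε.2)

theorem eventually_logCovRatio_nonneg (E : Set X) : ∀ᶠ ε in 𝓝[>] 0, 0 ≤ logCovRatio E ε := by
  filter_upwards [Ioo_mem_nhdsGT zero_lt_one] with ε hε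
  exact div_nonneg (Real.log_natCast_nonneg _) (log_one_div_pos hε).le

end CoveringNumber

/-- `a` is a covering exponent of `E` if `E` is covered by `O(ε⁻ᵃ)` balls of radius `ε` as
`ε → 0⁺`. Unlike a bound on the real number `dimM E`, whose `limsup` has a junk value when it is
infinite, this forces `E` to be totally bounded. -/
def HasCoveringExponent {X : Type*} [PseudoMetricSpace X] (E : Set X) (a : ℝ) : Prop :=
  ∃ K : ℝ, ∀ᶠ ε in 𝓝[>] 0, ∃ t : Finset X,
    E ⊆ ⋃ x ∈ t, Metric.ball x ε ∧ (t.card : ℝ) ≤ K * ε⁻¹ ^ a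

namespace HasCoveringExponent

section Operations

variable {X : Type*} [PseudoMetricSpace X] {E F : Set X} {a : ℝ}

theorem mono (hE : HasCoveringExponent E a) (hFE : F ⊆ E) : HasCoveringExponent F a :=
  let ⟨K, hK⟩ := hE
  ⟨K, hK.mono fun _ ⟨t, ht, hcard⟩ => ⟨t, hFE.trans ht, hcard⟩⟩

theorem empty : HasCoveringExponent (∅ : Set X) a :=
  ⟨0, Eventually.of_forall fun _ => ⟨∅, by simp⟩⟩

theorem union (hE : HasCoveringExponent E a) (hF : HasCoveringExponent F a) :
    HasCoveringExponent (E ∪ F) a := by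
  classical
  obtain ⟨K, hK⟩ := hE
  obtain ⟨L, hL⟩ := hF
  refine ⟨K + L, ?_⟩
  filter_upwards [hK, hL] with ε ⟨t, ht, htK⟩ ⟨s, hs, hsL⟩
  refine ⟨t ∪ s, ?_, ?_⟩
  · rw [Finset.set_biUnion_union]
    exact union_subset_union ht hs
  · calc ((t ∪ s).card : ℝ) ≤ t.card + s.card := by exact_mod_cast Finset.card_union_le t s
      _ ≤ (K + L) * ε⁻¹ ^ a := by rw [add_mul]; exact add_le_add htK hsL

theorem biUnion {ι : Type*} {s : Set ι} (hs : s.Finite) {f : ι → Set X}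
    (hf : ∀ i ∈ s, HasCoveringExponent (f i) a) : HasCoveringExponent (⋃ i ∈ s, f i) a := by
  induction s, hs using Set.Finite.induction_on with
  | empty => simpa only [biUnion_empty] using empty
  | insert _ _ ih =>
    rw [biUnion_insert]
    exact (hf _ (mem_insert _ _)).union (ih fun i hi => hf i (mem_insert_of_mem _ hi))

theorem of_forall_cover {Y : Type*} [PseudoMetricSpace Y] {F : Set Y} {L : ℝ} (hL : 0 < L)
    (hE : HasCoveringExponent E a)
    (hEF : ∀ ε > 0, ∀ t : Finset X, E ⊆ ⋃ x ∈ t, Metric.ball x ε →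
      ∃ s : Finset Y, F ⊆ ⋃ y ∈ s, Metric.ball y (L * ε) ∧ s.card ≤ t.card) :
    HasCoveringExponent F a := by
  obtain ⟨K, hK⟩ := hE
  have hscale : Tendsto (fun ε : ℝ => ε / L) (𝓝[>] 0) (𝓝[>] 0) :=
    tendsto_nhdsWithin_iff.2 ⟨tendsto_nhdsWithin_of_tendsto_nhds
      (by simpa using (continuous_id.div_const L).tendsto 0),
      eventually_mem_nhdsWithin.mono fun _ hε => div_pos hε hL⟩
  refine ⟨K * L ^ a, ?_⟩
  filter_upwards [hscale.eventually hK, self_mem_nhdsWithin] with ε ⟨t, ht, htK⟩ (hε : 0 < ε)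
  obtain ⟨s, hs, hst⟩ := hEF (ε / L) (div_pos hε hL) t ht
  refine ⟨s, by rwa [mul_div_cancel₀ ε hL.ne'] at hs, ?_⟩
  calc (s.card : ℝ) ≤ t.card := by exact_mod_cast hst
    _ ≤ K * (ε / L)⁻¹ ^ a := htK
    _ = K * L ^ a * ε⁻¹ ^ a := by
      rw [inv_div, div_eq_mul_inv, Real.mul_rpow hL.le (inv_nonneg.2 hε.le), mul_assoc]

theorem image {Y : Type*} [PseudoMetricSpace Y] {f : X → Y} {L : ℝ≥0} (hf : LipschitzWith L f)
    (hE : HasCoveringExponent E a) : HasCoveringExponent (f '' E) a := by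
  classical
  have hL : (0 : ℝ) < L + 1 := by positivity
  refine of_forall_cover hL hE fun ε hε t ht => ⟨t.image f, ?_, Finset.card_image_le⟩
  rintro _ ⟨x, hx, rfl⟩
  obtain ⟨y, hy, hxy⟩ := mem_iUnion₂.1 (ht hx)
  refine mem_iUnion₂.2 ⟨f y, Finset.mem_image_of_mem f hy, ?_⟩
  calc dist (f x) (f y) ≤ L * dist x y := hf.dist_le_mul x y
    _ ≤ L * ε := by gcongr; exact (Metric.mem_ball.1 hxy).le
    _ < (L + 1) * ε := by linarith

theorem closure (hE : HasCoveringExponent E a) : HasCoveringExponent (closure E) a := by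
  refine of_forall_cover two_pos hE fun ε hε t ht => ⟨t, fun x hx => ?_, le_rfl⟩
  obtain ⟨z, hz, hxz⟩ := Metric.mem_closure_iff.1 hx ε hε
  obtain ⟨y, hy, hzy⟩ := mem_iUnion₂.1 (ht hz)
  refine mem_iUnion₂.2 ⟨y, hy, ?_⟩
  calc dist x y ≤ dist x z + dist z y := dist_triangle x z y
    _ < 2 * ε := by rw [two_mul]; exact add_lt_add hxz hzy

theorem univ_pi {ι : Type*} [Fintype ι] {X : ι → Type*} [∀ i, PseudoMetricSpace (X i)]
    {E : ∀ i, Set (X i)} {a : ι → ℝ} (hE : ∀ i, HasCoveringExponent (E i) (a i)) :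
    HasCoveringExponent (univ.pi E) (∑ i, a i) := by
  classical
  choose K hK using hE
  refine ⟨∏ i, K i, ?_⟩
  filter_upwards [eventually_all.2 hK, self_mem_nhdsWithin] with ε hcov (hε : 0 < ε)
  choose t ht htK using hcov
  refine ⟨Fintype.piFinset t, fun x hx => ?_, ?_⟩
  · choose y hy hxy using fun i => mem_iUnion₂.1 (ht i (hx i (mem_univ i)))
    exact mem_iUnion₂.2 ⟨y, Fintype.mem_piFinset.2 hy, (dist_pi_lt_iff hε).2 hxy⟩
  · calc ((Fintype.piFinset t).card : ℝ) = ∏ i, ((t i).card : ℝ) := by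
          rw [Fintype.card_piFinset, Nat.cast_prod]
      _ ≤ ∏ i, K i * ε⁻¹ ^ a i :=
          Finset.prod_le_prod (fun _ _ => Nat.cast_nonneg _) fun i _ => htK i
      _ = (∏ i, K i) * ε⁻¹ ^ ∑ i, a i := by
          rw [Finset.prod_mul_distrib, Real.rpow_sum_of_pos (inv_pos.2 hε)]

end Operations

section MinkowskiDimension

variable {X : Type*} [PseudoMetricSpace X] {E : Set X} {a b c : ℝ}

theorem exists_eventually_logCovRatio_le (hE : HasCoveringExponent E a) (ha : 0 ≤ a) :
    ∃ C, ∀ᶠ ε in 𝓝[>] 0, logCovRatio E ε ≤ C / Real.log (1 / ε) + a := by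
  obtain ⟨K, hK⟩ := hE
  refine ⟨Real.log (max K 1), ?_⟩
  filter_upwards [hK, Ioo_mem_nhdsGT zero_lt_one] with ε ⟨t, ht, htK⟩ hε
  have hlog := log_one_div_pos hε
  rw [logCovRatio, ← sub_le_iff_le_add, div_sub' hlog.ne', div_le_div_iff_of_pos_right hlog,
    sub_le_iff_le_add]
  rcases (covNum E ε).toNat.eq_zero_or_pos with hN | hN
  · have := Real.log_nonneg (le_max_right K 1)
    rw [hN, Nat.cast_zero, Real.log_zero]
    positivity
  have hpow : 0 < (1 / ε) ^ a := Real.rpow_pos_of_pos (one_div_pos.2 hε.1) a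
  have hcov : ((covNum E ε).toNat : ℝ) ≤ max K 1 * (1 / ε) ^ a :=
    calc ((covNum E ε).toNat : ℝ) ≤ t.card := by exact_mod_cast toNat_covNum_le_card ht
      _ ≤ K * (1 / ε) ^ a := by rwa [one_div]
      _ ≤ max K 1 * (1 / ε) ^ a := by gcongr; exact le_max_left K 1
  calc Real.log (covNum E ε).toNat ≤ Real.log (max K 1 * (1 / ε) ^ a) :=
        Real.log_le_log (Nat.cast_pos.2 hN) hcov
    _ = Real.log (max K 1) + Real.log (1 / ε) * a := by
        rw [Real.log_mul (by positivity) hpow.ne', Real.log_rpow (one_div_pos.2 hε.1), mul_comm a]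

theorem eventually_logCovRatio_lt (hE : HasCoveringExponent E a) (ha : 0 ≤ a) (hab : a < b) :
    ∀ᶠ ε in 𝓝[>] 0, logCovRatio E ε < b := by
  obtain ⟨C, hC⟩ := hE.exists_eventually_logCovRatio_le ha
  have hlog : Tendsto (fun ε : ℝ => Real.log (1 / ε)) (𝓝[>] 0) atTop := by
    simp only [one_div]
    exact Real.tendsto_log_atTop.comp tendsto_inv_nhdsGT_zero
  have hlim : Tendsto (fun ε : ℝ => C / Real.log (1 / ε) + a) (𝓝[>] 0) (𝓝 a) := by
    simpa only [zero_add] using (hlog.const_div_atTop C).add_const a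
  filter_upwards [hC, hlim.eventually_lt_const hab] with ε hle hlt
  exact hle.trans_lt hlt

theorem isBoundedUnder_logCovRatio (hE : HasCoveringExponent E a) (ha : 0 ≤ a) :
    IsBoundedUnder (· ≤ ·) (𝓝[>] 0) (logCovRatio E) :=
  isBoundedUnder_of_eventually_le <|
    (hE.eventually_logCovRatio_lt ha (lt_add_one a)).mono fun _ => le_of_lt

theorem dimM_le (hE : HasCoveringExponent E a) (ha : 0 ≤ a) : dimM E ≤ a :=
  le_of_forall_gt_imp_ge_of_dense fun _ hb =>
    limsup_le_of_le
      (isBoundedUnder_of_eventually_ge (eventually_logCovRatio_nonneg E)).isCoboundedUnder_le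
      ((hE.eventually_logCovRatio_lt ha hb).mono fun _ => le_of_lt)

theorem dimM_nonneg (hE : HasCoveringExponent E a) (ha : 0 ≤ a) : 0 ≤ dimM E :=
  le_limsup_of_frequently_le (eventually_logCovRatio_nonneg E).frequently
    (hE.isBoundedUnder_logCovRatio ha)

theorem of_dimM_lt (hE : HasCoveringExponent E c) (hc : 0 ≤ c) (ha : dimM E < a) :
    HasCoveringExponent E a := by
  have hratio : ∀ᶠ ε in 𝓝[>] 0, logCovRatio E ε < a :=
    eventually_lt_of_limsup_lt ha (hE.isBoundedUnder_logCovRatio hc)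
  obtain ⟨K, hK⟩ := hE
  refine ⟨1, ?_⟩
  filter_upwards [hratio, hK, Ioo_mem_nhdsGT zero_lt_one] with ε hlt ⟨t, ht, _⟩ hε
  obtain ⟨s, hs, hcard⟩ := exists_cover_card_le_toNat_covNum ht
  refine ⟨s, hs, ?_⟩
  calc (s.card : ℝ) ≤ (covNum E ε).toNat := by exact_mod_cast hcard
    _ ≤ ε⁻¹ ^ a := Real.le_rpow_of_log_le (inv_pos.2 hε.1) <| by
        rw [logCovRatio, div_lt_iff₀ (log_one_div_pos hε), one_div] at hlt
        exact hlt.le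
    _ = 1 * ε⁻¹ ^ a := (one_mul _).symm

end MinkowskiDimension

end HasCoveringExponent

theorem hasCoveringExponent_Icc (a b : ℝ) : HasCoveringExponent (Icc a b) 1 := by
  classical
  refine ⟨|b - a| + 2, ?_⟩
  filter_upwards [Ioo_mem_nhdsGT zero_lt_one] with ε hε
  have hε₀ := hε.1
  refine ⟨(Finset.Icc ⌊a / ε⌋ ⌊b / ε⌋).image fun k : ℤ => ε * k, fun x hx => ?_, ?_⟩
  · have hfloor : ⌊x / ε⌋ ∈ Finset.Icc ⌊a / ε⌋ ⌊b / ε⌋ := by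
      rw [Finset.mem_Icc]
      constructor <;> gcongr
      exacts [hx.1, hx.2]
    have hsub : x - ε * ⌊x / ε⌋ = ε * Int.fract (x / ε) := by
      rw [Int.fract, mul_sub, mul_div_cancel₀ x hε₀.ne']
    refine mem_iUnion₂.2 ⟨_, Finset.mem_image_of_mem _ hfloor, ?_⟩
    rw [Metric.mem_ball, Real.dist_eq, hsub, abs_of_nonneg (by positivity)]
    exact mul_lt_of_lt_one_right hε₀ (Int.fract_lt_one _)
  · have hcard : ((Finset.Icc ⌊a / ε⌋ ⌊b / ε⌋).card : ℝ) ≤ |b - a| / ε + 2 := by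
      have hle : (b - a) / ε ≤ |b - a| / ε := by gcongr; exact le_abs_self _
      rw [sub_div] at hle
      rw [Int.card_Icc, ← Int.cast_natCast, Int.toNat_eq_max, Int.cast_max]
      push_cast
      exact max_le (by linarith [Int.floor_le (b / ε), Int.lt_floor_add_one (a / ε)])
        (by positivity)
    calc (((Finset.Icc ⌊a / ε⌋ ⌊b / ε⌋).image fun k : ℤ => ε * k).card : ℝ)
        ≤ (Finset.Icc ⌊a / ε⌋ ⌊b / ε⌋).card := by exact_mod_cast Finset.card_image_le
      _ ≤ |b - a| / ε + 2 := hcard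
      _ ≤ |b - a| / ε + 2 / ε := by gcongr; exact le_div_self zero_le_two hε₀ hε.2.le
      _ = (|b - a| + 2) * ε⁻¹ ^ (1 : ℝ) := by rw [Real.rpow_one]; ring

section FiniteDimensional

variable {V : Type*} [NormedAddCommGroup V] [NormedSpace ℝ V] [FiniteDimensional ℝ V] {E : Set V}

theorem hasCoveringExponent_finrank_of_isBounded (hE : IsBounded E) :
    HasCoveringExponent E (finrank ℝ V) := by
  let e : V ≃L[ℝ] (Fin (finrank ℝ V) → ℝ) := ContinuousLinearEquiv.ofFinrankEq (by simp)
  obtain ⟨R, hR, hER⟩ := (e.lipschitz.isBounded_image hE).subset_closedBall_lt 0 0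
  have hbox : HasCoveringExponent (Metric.closedBall (0 : Fin (finrank ℝ V) → ℝ) R)
      (finrank ℝ V) := by
    rw [closedBall_pi _ hR.le]
    simpa [Real.closedBall_eq_Icc] using
      HasCoveringExponent.univ_pi fun _ : Fin (finrank ℝ V) => hasCoveringExponent_Icc (-R) R
  refine (hbox.image e.symm.lipschitz).mono fun x hx => ⟨e x, hER (mem_image_of_mem e hx), ?_⟩
  exact e.symm_apply_apply x

theorem dimM_nonneg_of_isBounded (hE : IsBounded E) : 0 ≤ dimM E :=
  (hasCoveringExponent_finrank_of_isBounded hE).dimM_nonneg (Nat.cast_nonneg _)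

theorem zero_mem_lowerBounds_iSup_dimM (E : Set V) :
    0 ∈ lowerBounds {a : ℝ | ∃ f : ℕ → Set V, (E ⊆ ⋃ j, f j) ∧ (∀ j, IsBounded (f j)) ∧
      a = ⨆ j, dimM (f j)} := by
  rintro _ ⟨f, -, hf, rfl⟩
  exact Real.iSup_nonneg fun j => dimM_nonneg_of_isBounded (hf j)

theorem dimP_nonneg (E : Set V) : 0 ≤ dimP E :=
  Real.sInf_nonneg (zero_mem_lowerBounds_iSup_dimM E)

theorem dimP_le_dimM (hE : IsBounded E) : dimP E ≤ dimM E :=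
  csInf_le ⟨0, zero_mem_lowerBounds_iSup_dimM E⟩
    ⟨fun _ => E, (iUnion_const E).ge, fun _ => hE, ciSup_const.symm⟩

theorem exists_cover_hasCoveringExponent_of_dimP_lt {a : ℝ} (ha : dimP E < a) :
    ∃ f : ℕ → Set V, E ⊆ ⋃ j, f j ∧ (∀ j, IsBounded (f j)) ∧
      ∀ j, HasCoveringExponent (f j) a := by
  have hballs : E ⊆ ⋃ j : ℕ, Metric.ball 0 j := by
    rw [Metric.iUnion_ball_nat]
    exact subset_univ E
  obtain ⟨_, ⟨f, hcov, hf, rfl⟩, hlt⟩ :=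
    exists_lt_of_csInf_lt (by exact ⟨_, _, hballs, fun _ => Metric.isBounded_ball, rfl⟩) ha
  have hbdd : BddAbove (range fun j => dimM (f j)) := by
    refine ⟨finrank ℝ V, ?_⟩
    rintro _ ⟨j, rfl⟩
    exact (hasCoveringExponent_finrank_of_isBounded (hf j)).dimM_le (Nat.cast_nonneg _)
  refine ⟨f, hcov, hf, fun j => ?_⟩
  exact (hasCoveringExponent_finrank_of_isBounded (hf j)).of_dimM_lt (Nat.cast_nonneg _)
    ((le_ciSup hbdd j).trans_lt hlt)

end FiniteDimensional

theorem exists_nonempty_interior_of_nonempty_interior_iUnion {X ι : Type*} [TopologicalSpace X]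
    [BaireSpace X] [Countable ι] {F : ι → Set X} (hF : ∀ i, IsClosed (F i))
    (hne : (interior (⋃ i, F i)).Nonempty) : ∃ i, (interior (F i)).Nonempty := by
  by_contra! hempty
  have hmeagre : IsMeagre (⋃ i, F i) := isMeagre_iUnion fun i =>
    ((hF i).isNowhereDense_iff.2 (hempty i)).isMeagre
  exact not_isMeagre_of_isOpen isOpen_interior hne (hmeagre.mono interior_subset)

section Patterns

variable {V : Type*} [NormedAddCommGroup V] [NormedSpace ℝ V] {P : Finset ℝ} {S B C : Set V}

/-- The scaling factors `r` for which `B` contains a `P`-pattern `{x + p • r : p ∈ P}`. -/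
def patternScalings (P : Finset ℝ) (B : Set V) : Set V :=
  {r | ∃ x, ∀ p ∈ P, x + p • r ∈ B}

theorem patternScalings_mono (hBC : B ⊆ C) : patternScalings P B ⊆ patternScalings P C :=
  fun _ ⟨x, hx⟩ => ⟨x, fun p hp => hBC (hx p hp)⟩

theorem patternScalings_iUnion_of_directed {ι : Type*} [Nonempty ι] {E : ι → Set V}
    (hE : Directed (· ⊆ ·) E) :
    patternScalings P (⋃ i, E i) = ⋃ i, patternScalings P (E i) := by
  classical
  refine Subset.antisymm ?_ (iUnion_subset fun i => patternScalings_mono (subset_iUnion E i))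
  rintro r ⟨x, hx⟩
  have hpattern : ↑(P.image fun p => x + p • r) ⊆ ⋃ i, E i := by
    simpa [subset_def] using hx
  obtain ⟨i, hi⟩ := hE.exists_mem_subset_of_finset_subset_biUnion hpattern
  exact mem_iUnion.2 ⟨i, x, fun p hp => hi (Finset.mem_image_of_mem _ hp)⟩

theorem isClosed_patternScalings (P : Finset ℝ) {K : Set V} (hK : IsCompact K) :
    IsClosed (patternScalings P K) := by
  rcases P.eq_empty_or_nonempty with rfl | ⟨q, hq⟩
  · simp [patternScalings]
  have : CompactSpace K := isCompact_iff_compactSpace.1 hK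
  -- The base point is confined to the compact set `K` by moving it to the pattern point of `q`.
  have hclosed : IsClosed {w : V × K | ∀ p ∈ P, (w.2 : V) + (p - q) • w.1 ∈ K} := by
    simp only [ofPred_forall]
    exact isClosed_biInter fun p _ => hK.isClosed.preimage (by fun_prop)
  have himage : patternScalings P K =
      Prod.fst '' {w : V × K | ∀ p ∈ P, (w.2 : V) + (p - q) • w.1 ∈ K} := by
    ext r
    constructor
    · rintro ⟨x, hx⟩
      refine ⟨(r, ⟨x + q • r, hx q hq⟩), fun p hp => ?_, rfl⟩
      convert hx p hp using 1
      module
    · rintro ⟨⟨r, y⟩, hy, rfl⟩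
      refine ⟨y - q • r, fun p hp => ?_⟩
      convert hy p hp using 1
      module
  rw [himage]
  exact isClosedMap_fst_of_compactSpace _ hclosed

theorem exists_isBounded_subset_patternScalings (hS : IsBounded S) (P : Finset ℝ) :
    ∃ B : Set V, IsBounded B ∧ S ⊆ patternScalings P B := by
  refine ⟨⋃ p ∈ P, (p • ·) '' S, (isBounded_biUnion_finset P).2 fun p _ =>
    (lipschitzWith_smul p).isBounded_image hS, fun r hr => ⟨0, fun p hp => ?_⟩⟩
  rw [zero_add]
  exact mem_iUnion₂.2 ⟨p, hp, mem_image_of_mem _ hr⟩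

theorem exists_pos_forall_add_smul_mem {U : Set V} {r₀ : V} (hU : U ∈ 𝓝 r₀) (hS : IsBounded S) :
    ∃ δ : ℝ, 0 < δ ∧ ∀ s ∈ S, r₀ + δ • s ∈ U := by
  obtain ⟨η, hη, hball⟩ := Metric.mem_nhds_iff.1 hU
  obtain ⟨R, hR, hSR⟩ := hS.exists_pos_norm_lt
  refine ⟨η / R, div_pos hη hR, fun s hs => hball ?_⟩
  rw [mem_ball_iff_norm, add_sub_cancel_left, norm_smul, Real.norm_of_nonneg (by positivity)]
  calc η / R * ‖s‖ < η / R * R := by gcongr; exact hSR s hs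
    _ = η := div_mul_cancel₀ η hR.ne'

theorem exists_similar_copies_subset_patternScalings (hS : IsBounded S)
    (hB : (interior (patternScalings P B)).Nonempty) :
    ∃ (δ : ℝ) (r₀ : V), S ⊆ patternScalings P (⋃ p ∈ P, (fun y => δ • (y - p • r₀)) '' B) := by
  obtain ⟨r₀, hr₀⟩ := hB
  obtain ⟨δ, hδ, hSδ⟩ := exists_pos_forall_add_smul_mem (mem_interior_iff_mem_nhds.1 hr₀) hS
  refine ⟨δ⁻¹, r₀, fun s hs => ?_⟩
  obtain ⟨x, hx⟩ := hSδ s hs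
  refine ⟨δ⁻¹ • x, fun p hp => mem_iUnion₂.2 ⟨p, hp, _, hx p hp, ?_⟩⟩
  calc δ⁻¹ • (x + p • (r₀ + δ • s) - p • r₀) = δ⁻¹ • x + δ⁻¹ • δ • (p • s) := by module
    _ = δ⁻¹ • x + p • s := by rw [inv_smul_smul₀ hδ.ne']

theorem exists_isBounded_hasCoveringExponent_of_dimP_lt [FiniteDimensional ℝ V]
    (hS : IsBounded S) (hSint : (interior S).Nonempty) (hSB : S ⊆ patternScalings P B) {a : ℝ}
    (ha : dimP B < a) :
    ∃ C, IsBounded C ∧ S ⊆ patternScalings P C ∧ HasCoveringExponent C a := by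
  obtain ⟨f, hBf, hfbdd, hfa⟩ := exists_cover_hasCoveringExponent_of_dimP_lt ha
  let E : ℕ → Set V := fun j => closure (accumulate f j)
  have hEmono : Monotone E := fun i j hij => closure_mono (monotone_accumulate hij)
  have hEcompact : ∀ j, IsCompact (E j) := fun j =>
    ((isBounded_biUnion (finite_Iic j)).2 fun i _ => hfbdd i).isCompact_closure
  have hEa : ∀ j, HasCoveringExponent (E j) a := fun j =>
    (HasCoveringExponent.biUnion (finite_Iic j) fun i _ => hfa i).closure
  have hBE : B ⊆ ⋃ j, E j :=
    hBf.trans (iUnion_mono fun j => subset_accumulate.trans subset_closure)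
  have hSE : S ⊆ ⋃ j, patternScalings P (E j) := by
    rw [← patternScalings_iUnion_of_directed hEmono.directed_le]
    exact hSB.trans (patternScalings_mono hBE)
  obtain ⟨j, hj⟩ := exists_nonempty_interior_of_nonempty_interior_iUnion
    (fun j => isClosed_patternScalings P (hEcompact j)) (hSint.mono (interior_mono hSE))
  obtain ⟨δ, r₀, hδ⟩ := exists_similar_copies_subset_patternScalings hS hj
  have hlip : ∀ p : ℝ, LipschitzWith ‖δ‖₊ fun y : V => δ • (y - p • r₀) := fun p => by
    simpa [Function.comp_def] using
      (lipschitzWith_smul δ).comp (LipschitzWith.id.sub (LipschitzWith.const (p • r₀)))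
  exact ⟨_, (isBounded_biUnion_finset P).2 fun p _ =>
    (hlip p).isBounded_image (hEcompact j).isBounded, hδ,
    HasCoveringExponent.biUnion P.finite_toSet fun p _ => (hEa j).image (hlip p)⟩

end Patterns

theorem stmt6_general {V : Type*} [NormedAddCommGroup V] [NormedSpace ℝ V]
    [FiniteDimensional ℝ V] {S : Set V} (hS : IsBounded S) (hSint : (interior S).Nonempty)
    (P : Finset ℝ) :
    sInf {a : ℝ | ∃ B : Set V, IsBounded B ∧ S ⊆ patternScalings P B ∧ a = dimM B} =
      sInf {a : ℝ | ∃ B : Set V, S ⊆ patternScalings P B ∧ a = dimP B} := by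
  obtain ⟨B₀, hB₀, hSB₀⟩ := exists_isBounded_subset_patternScalings hS P
  apply le_antisymm
  · refine le_csInf ⟨_, B₀, hSB₀, rfl⟩ ?_
    rintro _ ⟨B, hSB, rfl⟩
    refine le_of_forall_gt_imp_ge_of_dense fun a ha => ?_
    obtain ⟨C, hC, hSC, hCa⟩ := exists_isBounded_hasCoveringExponent_of_dimP_lt hS hSint hSB ha
    refine le_trans (csInf_le ⟨0, ?_⟩ ⟨C, hC, hSC, rfl⟩)
      (hCa.dimM_le ((dimP_nonneg B).trans ha.le))
    rintro _ ⟨B, hB, -, rfl⟩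
    exact dimM_nonneg_of_isBounded hB
  · refine le_csInf ⟨_, B₀, hB₀, hSB₀, rfl⟩ ?_
    rintro _ ⟨B, hB, hSB, rfl⟩
    refine le_trans (csInf_le ⟨0, ?_⟩ ⟨B, hSB, rfl⟩) (dimP_le_dimM hB)
    rintro _ ⟨B, -, rfl⟩
    exact dimP_nonneg B

section UnitCube

variable (n : ℕ)

/-- The cube `[0,1]^n` of scaling factors. -/
def unitCube : Set (EuclideanSpace ℝ (Fin n)) :=
  {r | ∀ i, r i ∈ Icc (0 : ℝ) 1}

theorem unitCube_eq_preimage :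
    unitCube n = EuclideanSpace.equiv (Fin n) ℝ ⁻¹' univ.pi fun _ => Icc 0 1 := by
  simp [unitCube, Set.pi, preimage]

theorem isBounded_unitCube : IsBounded (unitCube n) := by
  rw [unitCube_eq_preimage]
  exact (EuclideanSpace.equiv (Fin n) ℝ).antilipschitz.isBounded_preimage
    (IsBounded.pi fun _ => Metric.isBounded_Icc 0 1)

theorem interior_unitCube_nonempty : (interior (unitCube n)).Nonempty := by
  rw [unitCube_eq_preimage]
  refine Nonempty.mono (preimage_interior_subset_interior_preimage
    (EuclideanSpace.equiv (Fin n) ℝ).continuous) ?_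
  rw [interior_pi_set finite_univ]
  simp only [interior_Icc]
  exact (univ_pi_nonempty_iff.2 fun _ => nonempty_Ioo.2 zero_lt_one).preimage
    (EuclideanSpace.equiv (Fin n) ℝ).surjective

end UnitCube

/-- For every `n ≥ 1` and nonempty finite `P ⊂ ℝ`, the infimum of the Minkowski dimension over
bounded `B ⊆ ℝ^n` containing a `P`-pattern `{x + p·r : p ∈ P}` for every scaling factor
`r ∈ [0,1]^n` equals the infimum of the packing dimension over arbitrary such sets. -/
theorem stmt6 (n : ℕ) (hn : 1 ≤ n) (P : Finset ℝ) (hP : P.Nonempty) :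
    sInf { a : ℝ | ∃ B : Set (EuclideanSpace ℝ (Fin n)), IsBounded B ∧
        (∀ r : EuclideanSpace ℝ (Fin n), (∀ i, r i ∈ Icc (0 : ℝ) 1) →
          ∃ x : EuclideanSpace ℝ (Fin n), ∀ p ∈ P, x + p • r ∈ B) ∧
        a = dimM B } =
    sInf { a : ℝ | ∃ B : Set (EuclideanSpace ℝ (Fin n)),
        (∀ r : EuclideanSpace ℝ (Fin n), (∀ i, r i ∈ Icc (0 : ℝ) 1) →
          ∃ x : EuclideanSpace ℝ (Fin n), ∀ p ∈ P, x + p • r ∈ B) ∧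
        a = dimP B } :=
  stmt6_general (isBounded_unitCube n) (interior_unitCube_nonempty n) P
end

section
/- Consider sets B ⊆ ℝ² containing the boundary of an axis-parallel square centered at each point of the segment [0,1] × {0}; that is, for every t ∈ [0,1] there exists s(t) > 0 with {y ∈ ℝ² : ‖y − (t,0)‖_∞ = s(t)} ⊆ B. Then: (i) every such set B satisfies dim_P B ≥ 17/11; and (ii) there exists a compact set B ⊆ ℝ² with this property satisfying dim_M B ≤ 7/4. -/
open Set Filter Bornology

/-- The boundary of the axis-parallel square in the plane with center `c` and half-side `s`,
with respect to the sup norm `‖y - c‖_∞ = max |y 0 - c 0| |y 1 - c 1|`. -/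
def squareBdry (c : Fin 2 → ℝ) (s : ℝ) : Set (Fin 2 → ℝ) :=
  { y | max |y 0 - c 0| |y 1 - c 1| = s }

/-!
(i) Split `B` into countably many pieces covered by `O(ε ^ (-α))` balls of radius `ε`. By Baire's
theorem each side of each square has a subsegment in the closure of one piece, and countable
subadditivity makes the piece and the subsegment's projection uniform over a set of centers `t` of
positive outer measure. Distinct sides on `ε`-separated parallel lines use up different balls,
`1 / ε` of them each, so the sets of values of `t + s`, `t - s` and `s` are covered by
`O(ε ^ (-(α - 1)))` intervals. The Katz–Tao inequality turns this into `O(ε ^ (-11/6 (α - 1)))`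
intervals for the values of `t`, and positive measure forces `11/6 (α - 1) ≥ 1`.

(ii) Splitting base-8 digits in binary gives `t = 4 z₁ + 2 z₂ + z₃` with each `zᵢ` in the
`1/3`-dimensional set `Z` of numbers with base-8 digits in `{0, 1}`. For `s = 2 + 2 z₂ - z₃` each
of `t + s`, `t - s`, `s`, `-s` involves only two of the `zᵢ`, so all sides lie on lines given by a
fixed set of dimension `2/3`, and the union of these lines has dimension `5/3`.
-/

open MeasureTheory Metric
open scoped Finset Topology

section Counting

variable {ι α β γ G : Type*}

lemma mul_mul_le_pow_three_average {x y z : ℝ} (hx : 0 ≤ x) (hy : 0 ≤ y) (hz : 0 ≤ z) :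
    x * y * z ≤ ((x + y + z) / 3) ^ 3 := by
  nlinarith [mul_nonneg hx (sq_nonneg (y - z)), mul_nonneg hy (sq_nonneg (z - x)),
    mul_nonneg hz (sq_nonneg (x - y)), mul_nonneg hx (sq_nonneg (x - y)),
    mul_nonneg hx (sq_nonneg (x - z)), mul_nonneg hy (sq_nonneg (x - y)),
    mul_nonneg hy (sq_nonneg (y - z)), mul_nonneg hz (sq_nonneg (y - z)),
    mul_nonneg hz (sq_nonneg (x - z))]

lemma pow_three_sum_le_mul_sum (s : Finset ι) {w x y z : ι → ℝ} (hx : ∀ i ∈ s, 0 ≤ x i)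
    (hy : ∀ i ∈ s, 0 ≤ y i) (hz : ∀ i ∈ s, 0 ≤ z i) (hw : ∀ i ∈ s, w i ^ 3 ≤ x i * y i * z i) :
    (∑ i ∈ s, w i) ^ 3 ≤ (∑ i ∈ s, x i) * (∑ i ∈ s, y i) * ∑ i ∈ s, z i := by
  have hodd : Odd 3 := by decide
  have hX := Finset.sum_nonneg hx
  have hY := Finset.sum_nonneg hy
  have hZ := Finset.sum_nonneg hz
  have hnormalize {x : ι → ℝ} (hx : ∀ i ∈ s, 0 ≤ x i) (i : ι) (hi : i ∈ s) :
      x i = (∑ j ∈ s, x j) * (x i / ∑ j ∈ s, x j) :=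
    (mul_div_cancel_of_imp' fun h => (Finset.sum_eq_zero_iff_of_nonneg hx).1 h i hi).symm
  set X := ∑ i ∈ s, x i with hXdef
  set Y := ∑ i ∈ s, y i with hYdef
  set Z := ∑ i ∈ s, z i with hZdef
  obtain ⟨c, hc⟩ : ∃ c : ℝ, c ^ 3 = X * Y * Z :=
    ⟨(X * Y * Z) ^ ((3 : ℕ) : ℝ)⁻¹, Real.rpow_inv_natCast_pow (by positivity) three_ne_zero⟩
  have hc0 : 0 ≤ c := hodd.pow_nonneg_iff.1 (hc ▸ by positivity)
  have hpoint (i : ι) (hi : i ∈ s) : w i ≤ c * ((x i / X + y i / Y + z i / Z) / 3) := by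
    refine hodd.pow_le_pow.1 ((hw i hi).trans ?_)
    calc x i * y i * z i = c ^ 3 * (x i / X * (y i / Y) * (z i / Z)) := by
          rw [hc]
          nth_rw 1 [hnormalize hx i hi, hnormalize hy i hi, hnormalize hz i hi]
          ring
      _ ≤ c ^ 3 * ((x i / X + y i / Y + z i / Z) / 3) ^ 3 := by
          gcongr
          exact mul_mul_le_pow_three_average (div_nonneg (hx i hi) hX)
            (div_nonneg (hy i hi) hY) (div_nonneg (hz i hi) hZ)
      _ = _ := (mul_pow _ _ _).symm
  have hsum : ∑ i ∈ s, w i ≤ c := by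
    calc ∑ i ∈ s, w i ≤ ∑ i ∈ s, c * ((x i / X + y i / Y + z i / Z) / 3) :=
          Finset.sum_le_sum hpoint
      _ = c * ((X / X + Y / Y + Z / Z) / 3) := by
          simp only [← Finset.mul_sum, ← Finset.sum_div, Finset.sum_add_distrib, hXdef, hYdef,
            hZdef]
      _ ≤ c * ((1 + 1 + 1) / 3) := by gcongr <;> exact div_self_le_one _
      _ = c := by ring
  exact hc ▸ hodd.pow_le_pow.2 hsum

lemma sum_inv_card_fiber [DecidableEq β] (s : Finset ι) (f : ι → β) :
    ∑ i ∈ s, (#{j ∈ s | f j = f i} : ℝ)⁻¹ = #(s.image f) := by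
  rw [Finset.sum_comp (fun b => (#{j ∈ s | f j = b} : ℝ)⁻¹) f, Finset.card_eq_sum_ones,
    Nat.cast_sum]
  refine Finset.sum_congr rfl fun b hb => ?_
  obtain ⟨i, hi, rfl⟩ := Finset.mem_image.1 hb
  have : #{j ∈ s | f j = f i} ≠ 0 := Finset.card_ne_zero_of_mem (Finset.mem_filter.2 ⟨hi, rfl⟩)
  simp [this]

lemma card_pow_three_le_card_chains [DecidableEq β] [DecidableEq γ] (s : Finset ι) (f : ι → β)
    (g : ι → γ) :
    #s ^ 3 ≤ #{p ∈ s ×ˢ s ×ˢ s | f p.2.1 = f p.1 ∧ g p.2.2 = g p.1} *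
      #(s.image f) * #(s.image g) := by
  have hchains : #{p ∈ s ×ˢ s ×ˢ s | f p.2.1 = f p.1 ∧ g p.2.2 = g p.1} =
      ∑ i ∈ s, #{j ∈ s | f j = f i} * #{j ∈ s | g j = g i} := by
    rw [Finset.card_filter, Finset.sum_product]
    refine Finset.sum_congr rfl fun i _ => ?_
    rw [← Finset.card_filter, Finset.filter_product (fun j => f j = f i) (fun j => g j = g i),
      Finset.card_product]
  have hpos {b : ι → Prop} [DecidablePred b] (i : ι) (hi : i ∈ s) (hb : b i) :
      (#{j ∈ s | b j} : ℝ) ≠ 0 :=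
    Nat.cast_ne_zero.2 (Finset.card_ne_zero_of_mem (Finset.mem_filter.2 ⟨hi, hb⟩))
  have holder := pow_three_sum_le_mul_sum s (w := 1)
    (x := fun i => (#{j ∈ s | f j = f i} : ℝ) * #{j ∈ s | g j = g i})
    (y := fun i => (#{j ∈ s | f j = f i} : ℝ)⁻¹) (z := fun i => (#{j ∈ s | g j = g i} : ℝ)⁻¹)
    (fun _ _ => by positivity) (fun _ _ => by positivity) (fun _ _ => by positivity)
    (fun i hi => by
      have hf := hpos (b := fun j => f j = f i) i hi rfl
      have hg := hpos (b := fun j => g j = g i) i hi rfl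
      field_simp
      simp)
  rw [sum_inv_card_fiber, sum_inv_card_fiber] at holder
  rw [hchains]
  simpa [← Nat.cast_le (α := ℝ)] using holder

/-- The pairs of elements of `s` lying in a common fibre of `f`; in the Katz–Tao argument these
are the edges of a graph on `s`. -/
def fiberPairs [DecidableEq β] (s : Finset ι) (f : ι → β) : Finset (ι × ι) :=
  {p ∈ s ×ˢ s | f p.2 = f p.1}

lemma mem_fiberPairs [DecidableEq β] {s : Finset ι} {f : ι → β} {p : ι × ι} :
    p ∈ fiberPairs s f ↔ (p.1 ∈ s ∧ p.2 ∈ s) ∧ f p.2 = f p.1 := by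
  simp [fiberPairs]

lemma card_sq_le_card_image_mul_card_fiberPairs [DecidableEq β] (s : Finset ι) (f : ι → β) :
    #s ^ 2 ≤ #(s.image f) * #(fiberPairs s f) := by
  have hpairs : #(fiberPairs s f) = ∑ b ∈ s.image f, #{i ∈ s | f i = b} ^ 2 := by
    rw [fiberPairs, Finset.card_filter, Finset.sum_product]
    simp only [← Finset.card_filter]
    rw [Finset.sum_comp (fun b => #{j ∈ s | f j = b}) f]
    simp only [sq, smul_eq_mul]
  rw [hpairs, Finset.card_eq_sum_card_image f s]
  exact sq_sum_le_card_mul_sum_sq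

lemma card_fiberPairs_image_prodMap_le [DecidableEq β] [DecidableEq γ] [DecidableEq α]
    (s : Finset ι) (f : ι → β) (g : ι → γ) (h : ι → α) :
    #((fiberPairs s f).image (Prod.map g h)) ≤ #(s.image g) * #(s.image h) := by
  rw [← Finset.card_product]
  refine Finset.card_le_card (Finset.image_subset_iff.2 fun p hp => Finset.mem_product.2 ?_)
  obtain ⟨⟨hp₁, hp₂⟩, -⟩ := mem_fiberPairs.1 hp
  exact ⟨Finset.mem_image_of_mem g hp₁, Finset.mem_image_of_mem h hp₂⟩

lemma card_chains_fiberPairs_le [AddCommGroup G] [DecidableEq G] (K : Finset ι) (a b : ι → G)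
    (hinj : Set.InjOn (a + b) K) :
    #{c ∈ fiberPairs K a ×ˢ fiberPairs K a ×ˢ fiberPairs K a |
        Prod.map b b c.2.1 = Prod.map b b c.1 ∧
        Prod.map b (a - b) c.2.2 = Prod.map b (a - b) c.1} ≤
      #((K.image (a - b) ×ˢ K.image (a - b)) ×ˢ (K.image a ×ˢ K.image b)) := by
  have hext {i j : ι} (hi : i ∈ K) (hj : j ∈ K) (ha : a i = a j) (hb : b i = b j) : i = j :=
    hinj hi hj (by simp only [Pi.add_apply, ha, hb])
  refine Finset.card_le_card_of_injOn
    (fun c => (((a - b) c.2.1.1, (a - b) c.2.1.2), (a c.1.1, b c.2.2.2))) ?_ ?_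
  · intro c hc
    simp only [Finset.coe_filter, Finset.mem_product, mem_fiberPairs, Set.mem_ofPred_eq] at hc
    obtain ⟨⟨⟨⟨hv, -⟩, -⟩, ⟨⟨hu, hu'⟩, -⟩, ⟨⟨-, hw'⟩, -⟩⟩, -⟩ := hc
    simp only [Finset.coe_product, Set.mem_prod, Finset.mem_coe]
    exact ⟨⟨Finset.mem_image_of_mem _ hu, Finset.mem_image_of_mem _ hu'⟩,
      Finset.mem_image_of_mem a hv, Finset.mem_image_of_mem b hw'⟩
  · rintro ⟨⟨v, v'⟩, ⟨u, u'⟩, ⟨w, w'⟩⟩ hc ⟨⟨x, x'⟩, ⟨y, y'⟩, ⟨z, z'⟩⟩ hd heq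
    simp only [Finset.coe_filter, Finset.mem_product, mem_fiberPairs, Set.mem_ofPred_eq,
      Prod.map, Prod.mk.injEq, Pi.sub_apply] at hc hd heq
    -- The differences at `u, u'` give `b v' - b v`, hence `a w + b w = a v - b v' + b w' + b v`.
    obtain rfl : w = z :=
      hinj hc.1.2.2.1.1 hd.1.2.2.1.1 (by simp only [Pi.add_apply]; grind)
    obtain rfl : v = x := hext (by tauto) (by tauto) (by grind) (by grind)
    obtain rfl : v' = x' := hext (by tauto) (by tauto) (by grind) (by grind)
    obtain rfl : u = y := hext (by tauto) (by tauto) (by grind) (by grind)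
    obtain rfl : u' = y' := hext (by tauto) (by tauto) (by grind) (by grind)
    obtain rfl : w' = z' := hext (by tauto) (by tauto) (by grind) (by grind)
    rfl

lemma card_pow_six_le_of_injOn_add [AddCommGroup G] [DecidableEq G] (K : Finset ι) (a b : ι → G)
    (hinj : Set.InjOn (a + b) K) :
    #K ^ 6 ≤ #(K.image a) ^ 4 * #(K.image b) ^ 4 * #(K.image (a - b)) ^ 3 := by
  set A := K.image a
  set B := K.image b
  set D := K.image (a - b)
  calc #K ^ 6 = (#K ^ 2) ^ 3 := by ring
    _ ≤ (#A * #(fiberPairs K a)) ^ 3 := by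
        gcongr
        exact card_sq_le_card_image_mul_card_fiberPairs K a
    _ = #A ^ 3 * #(fiberPairs K a) ^ 3 := by ring
    _ ≤ #A ^ 3 * (#((D ×ˢ D) ×ˢ (A ×ˢ B)) * (#B * #B) * (#B * #D)) := by
        gcongr
        refine (card_pow_three_le_card_chains _ (Prod.map b b) (Prod.map b (a - b))).trans ?_
        gcongr
        · exact card_chains_fiberPairs_le K a b hinj
        · exact card_fiberPairs_image_prodMap_le K a b b
        · exact card_fiberPairs_image_prodMap_le K a b (a - b)
    _ = #A ^ 4 * #B ^ 4 * #D ^ 3 := by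
        simp only [Finset.card_product]
        ring

lemma card_image_le_two_mul_of_eq_or [DecidableEq α] (K : Finset ι) {f g : ι → α} (h : α → α)
    (hfg : ∀ i ∈ K, f i = g i ∨ f i = h (g i)) : #(K.image f) ≤ 2 * #(K.image g) := by
  have hsub : K.image f ⊆ K.image g ∪ (K.image g).image h := by
    intro x hx
    obtain ⟨i, hi, rfl⟩ := Finset.mem_image.1 hx
    have hgi := Finset.mem_image_of_mem g hi
    rcases hfg i hi with hfi | hfi <;> rw [hfi]
    · exact Finset.mem_union_left _ hgi
    · exact Finset.mem_union_right _ (Finset.mem_image_of_mem h hgi)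
  calc #(K.image f) ≤ #(K.image g) + #((K.image g).image h) :=
        (Finset.card_le_card hsub).trans (Finset.card_union_le _ _)
    _ ≤ 2 * #(K.image g) := by
        rw [two_mul]
        exact Nat.add_le_add_left Finset.card_image_le _

lemma card_image_floor_pow_six_le {R : Type*} [Ring R] [LinearOrder R] [IsStrictOrderedRing R]
    [FloorRing R] (K : Finset ι) (u v : ι → R) :
    #(K.image fun i => ⌊u i⌋) ^ 6 ≤ 2 ^ 8 * #(K.image fun i => ⌊u i + v i⌋) ^ 4 *
      #(K.image fun i => ⌊u i - v i⌋) ^ 4 * #(K.image fun i => ⌊v i⌋) ^ 3 := by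
  obtain ⟨L, hLK, hLinj, hLimage⟩ := Finset.exists_subset_injOn_image_eq_of_surjOn
    (f := fun i => ⌊u i⌋) K (K.image fun i => ⌊u i⌋) (by
      rw [Finset.coe_image]; exact Set.surjOn_image _ _)
  rw [Finset.coe_subset] at hLK
  set a : ι → ℤ := fun i => ⌊u i⌋ + ⌊v i⌋ with ha
  set b : ι → ℤ := fun i => ⌊u i⌋ - ⌊v i⌋ with hb
  have hadd : Set.InjOn (a + b) L := fun i hi j hj hij =>
    hLinj hi hj (by simp only [ha, hb, Pi.add_apply] at hij ⊢; omega)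
  have hA : #(L.image a) ≤ 2 * #(K.image fun i => ⌊u i + v i⌋) := by
    grw [card_image_le_two_mul_of_eq_or (f := a) (g := fun i => ⌊u i + v i⌋) L (· - 1), hLK]
    intro i _
    have := Int.le_floor_add (u i) (v i)
    have := Int.le_floor_add_floor (u i) (v i)
    grind
  have hB : #(L.image b) ≤ 2 * #(K.image fun i => ⌊u i - v i⌋) := by
    grw [card_image_le_two_mul_of_eq_or (f := b) (g := fun i => ⌊u i - v i⌋) L (· + 1), hLK]
    intro i _
    have := Int.le_floor_add (u i - v i) (v i)
    have := Int.le_floor_add_floor (u i - v i) (v i)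
    grind
  have hD : #(L.image (a - b)) ≤ #(K.image fun i => ⌊v i⌋) := by
    have : L.image (a - b) = (L.image fun i => ⌊v i⌋).image (fun m => 2 * m) := by
      rw [Finset.image_image]
      congr 1
      ext i
      simp only [ha, hb, Pi.sub_apply, Function.comp_apply]
      ring
    grw [this, Finset.card_image_le, hLK]
  calc #(K.image fun i => ⌊u i⌋) ^ 6 = #L ^ 6 := by
        rw [← hLimage, Finset.card_image_of_injOn hLinj]
    _ ≤ #(L.image a) ^ 4 * #(L.image b) ^ 4 * #(L.image (a - b)) ^ 3 :=
        card_pow_six_le_of_injOn_add L a b hadd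
    _ ≤ (2 * #(K.image fun i => ⌊u i + v i⌋)) ^ 4 * (2 * #(K.image fun i => ⌊u i - v i⌋)) ^ 4 *
          #(K.image fun i => ⌊v i⌋) ^ 3 := by gcongr
    _ = _ := by ring

end Counting

section Covering

variable {X Y : Type*} [PseudoMetricSpace X] [PseudoMetricSpace Y] {E E' : Set X} {a b c : ℝ}

/-- `E` is covered by `O(ε ^ (-a))` open balls of radius `ε` as `ε → 0⁺`: the quantitative form of
"upper Minkowski dimension at most `a`". The covers are required to be finite, whereas `dimM`
gives a junk value to infinite covering numbers. -/
def HasCovGrowth (E : Set X) (a : ℝ) : Prop :=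
  ∃ C : ℝ, ∀ᶠ ε in 𝓝[>] (0 : ℝ), ∃ F : Finset X, E ⊆ (⋃ x ∈ F, ball x ε) ∧
    (#F : ℝ) ≤ C * (1 / ε) ^ a

lemma tendsto_one_div_nhdsGT_zero : Tendsto (fun ε : ℝ => 1 / ε) (𝓝[>] 0) atTop := by
  simpa only [one_div] using tendsto_inv_nhdsGT_zero (𝕜 := ℝ)

lemma covNum_toNat_le_card {ε : ℝ} {F : Finset X} (h : E ⊆ ⋃ x ∈ F, ball x ε) :
    (covNum E ε).toNat ≤ #F :=
  ENat.toNat_le_of_le_natCast (iInf₂_le F h)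

lemma exists_finset_card_le_covNum {ε : ℝ} {F : Finset X} (h : E ⊆ ⋃ x ∈ F, ball x ε) :
    ∃ F' : Finset X, E ⊆ (⋃ x ∈ F', ball x ε) ∧ #F' ≤ (covNum E ε).toNat := by
  have hfinite : covNum E ε ≠ ⊤ := ne_top_of_le_ne_top (ENat.natCast_ne_top #F) (iInf₂_le F h)
  by_contra! hlarge
  have hlt : ((covNum E ε).toNat + 1 : ℕ) ≤ covNum E ε :=
    le_iInf₂ fun F' hF' => by exact_mod_cast hlarge F' hF'
  rw [← ENat.natCast_toNat hfinite, Nat.cast_le, ENat.toNat_natCast] at hlt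
  omega

lemma eventually_log_covNum_div_nonneg (E : Set X) :
    ∀ᶠ ε in 𝓝[>] (0 : ℝ), 0 ≤ Real.log (covNum E ε).toNat / Real.log (1 / ε) := by
  filter_upwards [tendsto_one_div_nhdsGT_zero.eventually_gt_atTop 1] with ε hε
  exact div_nonneg (Real.log_natCast_nonneg _) (Real.log_pos hε).le

namespace HasCovGrowth

lemma eventually_log_covNum_div_le (h : HasCovGrowth E a) (ha : 0 ≤ a) (hab : a < b) :
    ∀ᶠ ε in 𝓝[>] (0 : ℝ), Real.log (covNum E ε).toNat / Real.log (1 / ε) ≤ b := by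
  obtain ⟨C, hC⟩ := h
  have hCle : ∀ᶠ ε in 𝓝[>] (0 : ℝ), C ≤ (1 / ε) ^ (b - a) :=
    ((tendsto_rpow_atTop (sub_pos.2 hab)).comp tendsto_one_div_nhdsGT_zero).eventually_ge_atTop C
  filter_upwards [hC, hCle, tendsto_one_div_nhdsGT_zero.eventually_gt_atTop 1]
    with ε ⟨F, hEF, hF⟩ hCε hε
  have hpos : 0 < 1 / ε := one_pos.trans hε
  have hcov : ((covNum E ε).toNat : ℝ) ≤ (1 / ε) ^ b := calc
    ((covNum E ε).toNat : ℝ) ≤ #F := by exact_mod_cast covNum_toNat_le_card hEF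
    _ ≤ C * (1 / ε) ^ a := hF
    _ ≤ (1 / ε) ^ (b - a) * (1 / ε) ^ a := by gcongr
    _ = (1 / ε) ^ b := by rw [← Real.rpow_add hpos, sub_add_cancel]
  rw [div_le_iff₀ (Real.log_pos hε), ← Real.log_rpow hpos]
  rcases (Nat.cast_nonneg (α := ℝ) (covNum E ε).toNat).eq_or_lt with hzero | hcovpos
  · rw [← hzero, Real.log_zero]
    exact Real.log_nonneg (Real.one_le_rpow hε.le (ha.trans hab.le))
  · exact Real.log_le_log hcovpos hcov

lemma dimM_le (h : HasCovGrowth E a) (ha : 0 ≤ a) : dimM E ≤ a :=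
  le_of_forall_gt_imp_ge_of_dense fun _ hab =>
    limsup_le_of_le
      (IsCoboundedUnder.of_frequently_ge (eventually_log_covNum_div_nonneg E).frequently)
      (h.eventually_log_covNum_div_le ha hab)

lemma of_dimM_lt (h : HasCovGrowth E b) (hb : 0 ≤ b) (ha : dimM E < a) : HasCovGrowth E a := by
  have hbdd := isBoundedUnder_of_eventually_le (h.eventually_log_covNum_div_le hb (lt_add_one b))
  obtain ⟨C, hC⟩ := h
  refine ⟨1, ?_⟩
  filter_upwards [hC, eventually_lt_of_limsup_lt ha hbdd,
    tendsto_one_div_nhdsGT_zero.eventually_gt_atTop 1] with ε ⟨F, hEF, _⟩ hratio hε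
  obtain ⟨F', hEF', hF'⟩ := exists_finset_card_le_covNum hEF
  refine ⟨F', hEF', ?_⟩
  have hpos : 0 < 1 / ε := one_pos.trans hε
  rw [div_lt_iff₀ (Real.log_pos hε), ← Real.log_rpow hpos] at hratio
  rw [one_mul]
  refine (Nat.cast_le.2 hF').trans ?_
  rcases (Nat.cast_nonneg (α := ℝ) (covNum E ε).toNat).eq_or_lt with hzero | hcovpos
  · exact hzero ▸ by positivity
  · exact (Real.log_le_log_iff hcovpos (by positivity)).1 hratio.le

lemma mono (h : HasCovGrowth E a) (hE : E' ⊆ E) : HasCovGrowth E' a :=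
  h.imp fun _ hC => hC.mono fun _ ⟨F, hEF, hF⟩ => ⟨F, hE.trans hEF, hF⟩

lemma exists_cover_radius_mul (h : HasCovGrowth E a) (hc : 0 < c) :
    ∃ C : ℝ, ∀ᶠ ε in 𝓝[>] (0 : ℝ), ∃ F : Finset X, E ⊆ (⋃ x ∈ F, ball x (c * ε)) ∧
      (#F : ℝ) ≤ C * (1 / ε) ^ a := by
  obtain ⟨C, hC⟩ := h
  have hscale : Tendsto (c * ·) (𝓝[>] (0 : ℝ)) (𝓝[>] 0) :=
    tendsto_nhdsWithin_iff.2 ⟨((continuous_const_mul c).tendsto' 0 0 (mul_zero c)).mono_left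
      nhdsWithin_le_nhds, eventually_mem_nhdsWithin.mono fun _ hε => mul_pos hc hε⟩
  refine ⟨|C| * (1 / c) ^ a, ?_⟩
  filter_upwards [hscale.eventually hC, self_mem_nhdsWithin] with ε ⟨F, hEF, hF⟩ (hε : 0 < ε)
  refine ⟨F, hEF, ?_⟩
  calc (#F : ℝ) ≤ C * (1 / (c * ε)) ^ a := hF
    _ ≤ |C| * (1 / c * (1 / ε)) ^ a := by
        rw [one_div_mul_one_div]
        gcongr
        exact le_abs_self C
    _ = |C| * (1 / c) ^ a * (1 / ε) ^ a := by
        rw [Real.mul_rpow (by positivity) (by positivity), mul_assoc]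

lemma closure (h : HasCovGrowth E a) : HasCovGrowth (closure E) a := by
  obtain ⟨C, hC⟩ := h.exists_cover_radius_mul one_half_pos
  refine ⟨C, ?_⟩
  filter_upwards [hC, self_mem_nhdsWithin] with ε ⟨F, hEF, hF⟩ (hε : 0 < ε)
  refine ⟨F, (closure_minimal (hEF.trans (iUnion₂_mono fun x _ => ball_subset_closedBall))
    (F.finite_toSet.isClosed_biUnion fun x _ => isClosed_closedBall)).trans
    (iUnion₂_mono fun x _ => closedBall_subset_ball (by linarith)), hF⟩

lemma union (h : HasCovGrowth E a) (h' : HasCovGrowth E' a) : HasCovGrowth (E ∪ E') a := by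
  classical
  obtain ⟨C, hC⟩ := h
  obtain ⟨C', hC'⟩ := h'
  refine ⟨C + C', ?_⟩
  filter_upwards [hC, hC'] with ε ⟨F, hEF, hF⟩ ⟨F', hEF', hF'⟩
  refine ⟨F ∪ F', ?_, ?_⟩
  · rw [Finset.set_biUnion_union]
    exact union_subset_union hEF hEF'
  · calc (#(F ∪ F') : ℝ) ≤ #F + #F' := by exact_mod_cast Finset.card_union_le F F'
      _ ≤ C * (1 / ε) ^ a + C' * (1 / ε) ^ a := add_le_add hF hF'
      _ = (C + C') * (1 / ε) ^ a := (add_mul _ _ _).symm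

lemma image (h : HasCovGrowth E a) {f : X → Y} {K : NNReal} (hf : LipschitzWith K f) :
    HasCovGrowth (f '' E) a := by
  classical
  have hK : (0 : ℝ) < K + 1 := by positivity
  obtain ⟨C, hC⟩ := h.exists_cover_radius_mul (inv_pos.2 hK)
  refine ⟨C, ?_⟩
  filter_upwards [hC, self_mem_nhdsWithin] with ε ⟨F, hEF, hF⟩ (hε : 0 < ε)
  refine ⟨F.image f, ?_, (Nat.cast_le.2 Finset.card_image_le).trans hF⟩
  rintro _ ⟨x, hx, rfl⟩
  obtain ⟨z, hz, hxz⟩ := mem_iUnion₂.1 (hEF hx)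
  refine mem_iUnion₂.2 ⟨f z, Finset.mem_image_of_mem f hz, ?_⟩
  calc dist (f x) (f z) ≤ K * dist x z := hf.dist_le_mul x z
    _ ≤ K * ((K + 1 : ℝ)⁻¹ * ε) := by gcongr; exact (mem_ball.1 hxz).le
    _ < (K + 1) * ((K + 1 : ℝ)⁻¹ * ε) := by gcongr; linarith
    _ = ε := mul_inv_cancel_left₀ hK.ne' ε

lemma pi {ι : Type*} [Fintype ι] {X : ι → Type*} [∀ i, PseudoMetricSpace (X i)]
    {E : ∀ i, Set (X i)} {a : ι → ℝ} (h : ∀ i, HasCovGrowth (E i) (a i)) :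
    HasCovGrowth (Set.univ.pi E) (∑ i, a i) := by
  classical
  choose C hC using h
  refine ⟨∏ i, C i, ?_⟩
  filter_upwards [eventually_all.2 hC, self_mem_nhdsWithin] with ε hcover (hε : 0 < ε)
  choose F hEF hF using hcover
  refine ⟨Fintype.piFinset F, ?_, ?_⟩
  · intro y hy
    choose x hxF hx using fun i => mem_iUnion₂.1 (hEF i (hy i trivial))
    exact mem_iUnion₂.2 ⟨x, Fintype.mem_piFinset.2 hxF, (dist_pi_lt_iff hε).2 hx⟩
  · rw [Fintype.card_piFinset, Nat.cast_prod, Real.rpow_sum_of_pos (by positivity),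
      ← Finset.prod_mul_distrib]
    exact Finset.prod_le_prod (fun _ _ => Nat.cast_nonneg _) fun i _ => hF i

end HasCovGrowth

end Covering

section RealLine

variable {ι Y : Type*} [PseudoMetricSpace Y] {a b α ε : ℝ}

lemma exists_finset_image_eq_of_forall_injOn_card_le {γ : Type*} {T : Set ι} {f : ι → γ} {r : ℝ}
    (h : ∀ K : Finset ι, ↑K ⊆ T → InjOn f K → (#K : ℝ) ≤ r) :
    ∃ K : Finset ι, ↑K ⊆ T ∧ f '' K = f '' T ∧ (#K : ℝ) ≤ r := by
  obtain ⟨T', hT'T, hinj, himage⟩ := (surjOn_image f T).exists_subset_injOn_image_eq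
  have hfinite : T'.Finite := by
    by_contra hinfinite
    obtain ⟨K, hKT', hK⟩ := Set.Infinite.exists_subset_card_eq hinfinite (⌊r⌋₊ + 1)
    have hle := h K (hKT'.trans hT'T) (hinj.mono hKT')
    rw [hK, Nat.cast_add_one] at hle
    exact (Nat.lt_floor_add_one r).not_ge hle
  refine ⟨hfinite.toFinset, ?_, ?_, h _ ?_ ?_⟩ <;> simpa only [hfinite.coe_toFinset]

lemma abs_sub_lt_of_floor_div_eq {x y : ℝ} (hε : 0 < ε) (h : ⌊x / ε⌋ = ⌊y / ε⌋) :
    |x - y| < ε := by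
  have := Int.abs_sub_lt_one_of_floor_eq_floor h
  rwa [← sub_div, abs_div, abs_of_pos hε, div_lt_one hε] at this

lemma card_image_floor_div_le {K : Finset ι} {w : ι → ℝ} {F : Finset ℝ} (hε : 0 < ε)
    (hF : ∀ i ∈ K, ∃ c ∈ F, dist (w i) c < ε) : #(K.image fun i => ⌊w i / ε⌋) ≤ 3 * #F := by
  have hsub : (K.image fun i => ⌊w i / ε⌋) ⊆
      F.biUnion fun c => Finset.Icc (⌊c / ε⌋ - 1) (⌊c / ε⌋ + 1) := by
    refine Finset.image_subset_iff.2 fun i hi => ?_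
    obtain ⟨c, hc, hic⟩ := hF i hi
    have hdiv : |w i / ε - c / ε| < 1 := by
      rwa [← sub_div, abs_div, abs_of_pos hε, div_lt_one hε]
    rw [abs_lt] at hdiv
    refine Finset.mem_biUnion.2 ⟨c, hc, Finset.mem_Icc.2 ⟨?_, ?_⟩⟩
    · rw [← Int.floor_sub_one]
      exact Int.floor_le_floor (by linarith)
    · rw [← Int.floor_add_one]
      exact Int.floor_le_floor (by linarith)
  calc #(K.image fun i => ⌊w i / ε⌋) ≤ #F * 3 :=
        (Finset.card_le_card hsub).trans
          (Finset.card_biUnion_le_card_mul _ _ _ fun c _ => by simp [Int.card_Icc]; omega)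
    _ = 3 * #F := mul_comm _ _

lemma volume_le_of_subset_biUnion_ball {S : Set ℝ} {F : Finset ι} {q : ι → ℝ}
    (h : S ⊆ ⋃ c ∈ F, ball (q c) ε) : volume S ≤ #F * ENNReal.ofReal (2 * ε) := calc
  volume S ≤ ∑ c ∈ F, volume (ball (q c) ε) :=
    (measure_mono h).trans (measure_biUnion_finset_le F _)
  _ = #F * ENNReal.ofReal (2 * ε) := by
    simp only [Real.volume_ball, Finset.sum_const, nsmul_eq_mul]

lemma HasCovGrowth.one_le_of_volume_ne_zero {S : Set ℝ} (h : HasCovGrowth S a)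
    (hS : volume S ≠ 0) : 1 ≤ a := by
  obtain ⟨C, hC⟩ := h
  by_contra! ha
  have hle : ∀ᶠ ε in 𝓝[>] (0 : ℝ), volume S ≤ ENNReal.ofReal (2 * C * ε ^ (1 - a)) := by
    filter_upwards [hC, self_mem_nhdsWithin] with ε ⟨F, hSF, hF⟩ (hε : 0 < ε)
    calc volume S ≤ #F * ENNReal.ofReal (2 * ε) := volume_le_of_subset_biUnion_ball hSF
      _ = ENNReal.ofReal (#F * (2 * ε)) := by
          rw [ENNReal.ofReal_mul (Nat.cast_nonneg _), ENNReal.ofReal_natCast]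
      _ ≤ ENNReal.ofReal (C * (1 / ε) ^ a * (2 * ε)) := by gcongr
      _ = ENNReal.ofReal (2 * C * ε ^ (1 - a)) := by
          rw [Real.rpow_sub hε, Real.rpow_one, one_div, Real.inv_rpow hε.le]
          congr 1
          ring
  have hlim : Tendsto (fun ε : ℝ => ENNReal.ofReal (2 * C * ε ^ (1 - a))) (𝓝[>] 0) (𝓝 0) := by
    have hcont : Continuous fun ε : ℝ => ENNReal.ofReal (2 * C * ε ^ (1 - a)) :=
      ENNReal.continuous_ofReal.comp
        (continuous_const.mul (Real.continuous_rpow_const (by linarith)))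
    refine (hcont.tendsto' 0 0 ?_).mono_left nhdsWithin_le_nhds
    rw [Real.zero_rpow (by linarith), mul_zero, ENNReal.ofReal_zero]
  exact hS (le_zero_iff.1 (ge_of_tendsto hlim hle))

lemma card_mul_length_le_of_segments {E : Set Y} {p q : Y → ℝ} (hp : LipschitzWith 1 p)
    (hq : LipschitzWith 1 q) (hε : 0 < ε) {K : Finset ℝ} {F : Finset Y}
    (hsegment : ∀ x ∈ K, ∀ y ∈ Icc a b, ∃ z ∈ E, p z = x ∧ q z = y)
    (hK : InjOn (fun x : ℝ => ⌊x / ε⌋) K) (hF : E ⊆ ⋃ c ∈ F, ball c ε) :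
    #K * (b - a) ≤ 6 * ε * #F := by
  classical
  let near : ℝ → Y → Prop := fun x c => dist x (p c) < ε
  have hmany (x : ℝ) (hx : x ∈ K) : b - a ≤ 2 * ε * #(F.bipartiteAbove near x) := by
    have hcover : Icc a b ⊆ ⋃ c ∈ F.bipartiteAbove near x, ball (q c) ε := by
      intro y hy
      obtain ⟨z, hz, rfl, rfl⟩ := hsegment x hx y hy
      obtain ⟨c, hc, hzc⟩ := mem_iUnion₂.1 (hF hz)
      refine mem_iUnion₂.2 ⟨c, (Finset.mem_bipartiteAbove near).2 ⟨hc, ?_⟩, ?_⟩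
      · exact ((hp.dist_le_mul z c).trans_eq (by simp)).trans_lt hzc
      · exact ((hq.dist_le_mul z c).trans_eq (by simp)).trans_lt hzc
    have := volume_le_of_subset_biUnion_ball hcover
    rwa [Real.volume_Icc, ← ENNReal.ofReal_natCast, ← ENNReal.ofReal_mul (Nat.cast_nonneg _),
      ENNReal.ofReal_le_ofReal_iff (by positivity), mul_comm] at this
  have hfew (c : Y) (_ : c ∈ F) : #(K.bipartiteBelow near c) ≤ 3 := by
    have hinj : InjOn (fun x : ℝ => ⌊x / ε⌋) (K.bipartiteBelow near c) :=
      hK.mono (Finset.coe_subset.2 (Finset.filter_subset _ _))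
    rw [← Finset.card_image_of_injOn hinj]
    exact card_image_floor_div_le (F := {p c}) hε fun x hx =>
      ⟨p c, Finset.mem_singleton_self _, ((Finset.mem_bipartiteBelow near).1 hx).2⟩
  have hcount : ∑ x ∈ K, #(F.bipartiteAbove near x) ≤ #F * 3 := by
    rw [Finset.sum_card_bipartiteAbove_eq_sum_card_bipartiteBelow]
    exact Finset.sum_le_card_nsmul F _ 3 hfew
  calc #K * (b - a) = ∑ _ ∈ K, (b - a) := by rw [Finset.sum_const, nsmul_eq_mul]
    _ ≤ ∑ x ∈ K, 2 * ε * #(F.bipartiteAbove near x) := Finset.sum_le_sum hmany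
    _ = 2 * ε * (∑ x ∈ K, #(F.bipartiteAbove near x) : ℕ) := by
        rw [Nat.cast_sum, Finset.mul_sum]
    _ ≤ 2 * ε * (#F * 3 : ℕ) := by gcongr
    _ = 6 * ε * #F := by push_cast; ring

lemma HasCovGrowth.sub_one_of_segments {E : Set Y} {p q : Y → ℝ} (h : HasCovGrowth E α)
    (hp : LipschitzWith 1 p) (hq : LipschitzWith 1 q) {S : Set ℝ} (hab : a < b)
    (hsegment : ∀ x ∈ S, ∀ y ∈ Icc a b, ∃ z ∈ E, p z = x ∧ q z = y) :
    HasCovGrowth S (α - 1) := by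
  have hlen : 0 < b - a := sub_pos.2 hab
  obtain ⟨C, hC⟩ := h
  refine ⟨6 * C / (b - a), ?_⟩
  filter_upwards [hC, self_mem_nhdsWithin] with ε ⟨F, hEF, hF⟩ (hε : 0 < ε)
  have hcount (K : Finset ℝ) (hKS : ↑K ⊆ S) (hinj : InjOn (fun x : ℝ => ⌊x / ε⌋) K) :
      (#K : ℝ) ≤ 6 * C / (b - a) * (1 / ε) ^ (α - 1) := by
    rw [div_mul_eq_mul_div, le_div_iff₀ hlen]
    calc #K * (b - a) ≤ 6 * ε * #F :=
          card_mul_length_le_of_segments hp hq hε (fun x hx => hsegment x (hKS hx)) hinj hEF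
      _ ≤ 6 * ε * (C * (1 / ε) ^ α) := by gcongr
      _ = 6 * C * (1 / ε) ^ (α - 1) := by
          rw [Real.rpow_sub_one (by positivity)]
          field_simp
  obtain ⟨K, -, himage, hK⟩ := exists_finset_image_eq_of_forall_injOn_card_le hcount
  refine ⟨K, fun x hx => ?_, hK⟩
  obtain ⟨k, hk, hkx⟩ := himage.ge (mem_image_of_mem _ hx)
  exact mem_iUnion₂.2 ⟨k, hk, abs_sub_lt_of_floor_div_eq hε hkx.symm⟩

lemma card_pow_six_le_of_add_sub_covers {K : Finset ι} {u v : ι → ℝ} {F₁ F₂ F₃ : Finset ℝ}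
    (hε : 0 < ε) (hinj : InjOn (fun i => ⌊u i / ε⌋) K)
    (hadd : ∀ i ∈ K, ∃ c ∈ F₁, dist (u i + v i) c < ε)
    (hsub : ∀ i ∈ K, ∃ c ∈ F₂, dist (u i - v i) c < ε)
    (hv : ∀ i ∈ K, ∃ c ∈ F₃, dist (v i) c < ε) :
    #K ^ 6 ≤ 2 ^ 8 * (3 * #F₁) ^ 4 * (3 * #F₂) ^ 4 * (3 * #F₃) ^ 3 := by
  have hfloor := card_image_floor_pow_six_le K (fun i => u i / ε) fun i => v i / ε
  simp only [← add_div, ← sub_div] at hfloor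
  rw [Finset.card_image_of_injOn hinj] at hfloor
  refine hfloor.trans ?_
  gcongr
  · exact card_image_floor_div_le hε hadd
  · exact card_image_floor_div_le hε hsub
  · exact card_image_floor_div_le hε hv

lemma HasCovGrowth.image_of_add_of_sub {T : Set ι} {u v : ι → ℝ} {β₁ β₂ β₃ : ℝ}
    (hadd : HasCovGrowth ((u + v) '' T) β₁) (hsub : HasCovGrowth ((u - v) '' T) β₂)
    (hv : HasCovGrowth (v '' T) β₃) :
    HasCovGrowth (u '' T) ((4 * β₁ + 4 * β₂ + 3 * β₃) / 6) := by
  classical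
  obtain ⟨C₁, hC₁⟩ := hadd
  obtain ⟨C₂, hC₂⟩ := hsub
  obtain ⟨C₃, hC₃⟩ := hv
  set C := 2 ^ 8 * (3 * C₁) ^ 4 * (3 * C₂) ^ 4 * (3 * C₃) ^ 3 with hC
  refine ⟨|C| ^ ((6 : ℕ) : ℝ)⁻¹, ?_⟩
  filter_upwards [hC₁, hC₂, hC₃, self_mem_nhdsWithin]
    with ε ⟨F₁, hE₁, hF₁⟩ ⟨F₂, hE₂, hF₂⟩ ⟨F₃, hE₃, hF₃⟩ (hε : 0 < ε)
  set r := |C| ^ ((6 : ℕ) : ℝ)⁻¹ * (1 / ε) ^ ((4 * β₁ + 4 * β₂ + 3 * β₃) / 6) with hr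
  have hpow : r ^ 6 = |C| * (((1 / ε) ^ β₁) ^ 4 * ((1 / ε) ^ β₂) ^ 4 * ((1 / ε) ^ β₃) ^ 3) := by
    simp only [hr, mul_pow, Real.rpow_inv_natCast_pow (abs_nonneg C) (by norm_num : 6 ≠ 0),
      ← Real.rpow_mul_natCast (one_div_pos.2 hε).le, ← Real.rpow_add (one_div_pos.2 hε)]
    congr 2
    push_cast
    ring
  have hcount (K : Finset ι) (hKT : ↑K ⊆ T) (hinj : InjOn (fun i => ⌊u i / ε⌋) K) :
      (#K : ℝ) ≤ r := by
    have hnear {w : ι → ℝ} {F : Finset ℝ} (hE : w '' T ⊆ ⋃ c ∈ F, ball c ε) (i : ι)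
        (hi : i ∈ K) : ∃ c ∈ F, dist (w i) c < ε := by
      simpa only [mem_iUnion₂, mem_ball, exists_prop] using hE (mem_image_of_mem w (hKT hi))
    refine (pow_le_pow_iff_left₀ (by positivity) (by positivity) (n := 6) (by norm_num)).1 ?_
    calc (#K : ℝ) ^ 6 ≤ 2 ^ 8 * (3 * #F₁) ^ 4 * (3 * #F₂) ^ 4 * (3 * #F₃) ^ 3 := by
          exact_mod_cast
            card_pow_six_le_of_add_sub_covers hε hinj (hnear hE₁) (hnear hE₂) (hnear hE₃)
      _ ≤ 2 ^ 8 * (3 * (C₁ * (1 / ε) ^ β₁)) ^ 4 * (3 * (C₂ * (1 / ε) ^ β₂)) ^ 4 *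
            (3 * (C₃ * (1 / ε) ^ β₃)) ^ 3 := by gcongr
      _ = C * (((1 / ε) ^ β₁) ^ 4 * ((1 / ε) ^ β₂) ^ 4 * ((1 / ε) ^ β₃) ^ 3) := by rw [hC]; ring
      _ ≤ |C| * (((1 / ε) ^ β₁) ^ 4 * ((1 / ε) ^ β₂) ^ 4 * ((1 / ε) ^ β₃) ^ 3) := by
          gcongr
          exact le_abs_self C
      _ = _ := hpow.symm
  obtain ⟨K, -, himage, hK⟩ := exists_finset_image_eq_of_forall_injOn_card_le hcount
  refine ⟨K.image u, ?_, (Nat.cast_le.2 Finset.card_image_le).trans hK⟩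
  rintro _ ⟨t, ht, rfl⟩
  obtain ⟨k, hk, hkt⟩ := himage.ge (mem_image_of_mem _ ht)
  exact mem_iUnion₂.2 ⟨u k, Finset.mem_image_of_mem u hk, abs_sub_lt_of_floor_div_eq hε hkt.symm⟩

end RealLine

section DigitSet

variable {b : ℕ}

/-- The numbers in `[0, 1]` having a base-`b` expansion all of whose digits lie in `A`; a
self-similar Cantor set of Minkowski dimension `log #A / log b`. -/
def digitSet (A : Finset (Fin b)) : Set ℝ :=
  Real.ofDigits '' {d : ℕ → Fin b | ∀ n, d n ∈ A}

lemma isCompact_digitSet (A : Finset (Fin b)) : IsCompact (digitSet A) :=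
  (isCompact_pi_infinite fun _ => A.finite_toSet.isCompact).image Real.continuous_ofDigits

lemma digitSet_subset_Icc (A : Finset (Fin b)) : digitSet A ⊆ Icc 0 1 := by
  rintro _ ⟨d, -, rfl⟩
  exact ⟨Real.ofDigits_nonneg d, Real.ofDigits_le_one d⟩

lemma digitSet_univ (hb : 1 < b) : digitSet (Finset.univ : Finset (Fin b)) = Icc 0 1 := by
  have : NeZero b := ⟨by omega⟩
  refine (digitSet_subset_Icc _).antisymm fun x hx => ?_
  obtain ⟨d, -, hd⟩ := Real.ofDigits_SurjOn hb hx
  exact ⟨d, fun _ => Finset.mem_univ _, hd⟩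

lemma exists_cover_digitSet (A : Finset (Fin b)) (n : ℕ) :
    ∃ F : Finset ℝ, (digitSet A ⊆ ⋃ x ∈ F, closedBall x ((b : ℝ) ^ n)⁻¹) ∧ #F ≤ #A ^ n := by
  refine ⟨(Fintype.piFinset fun _ : Fin n => A).image
    fun p => ∑ i : Fin n, (p i : ℝ) * ((b : ℝ) ^ ((i : ℕ) + 1))⁻¹, ?_, ?_⟩
  · rintro _ ⟨d, hd, rfl⟩
    refine mem_iUnion₂.2 ⟨_, Finset.mem_image_of_mem _
      (Fintype.mem_piFinset.2 fun i : Fin n => hd i), ?_⟩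
    rw [mem_closedBall, Real.dist_eq, Real.ofDigits_eq_sum_add_ofDigits d n,
      Fin.sum_univ_eq_sum_range (fun i => (d i : ℝ) * ((b : ℝ) ^ (i + 1))⁻¹)]
    simp only [Real.ofDigitsTerm, add_sub_cancel_left]
    rw [abs_of_nonneg (mul_nonneg (by positivity) (Real.ofDigits_nonneg _))]
    exact mul_le_of_le_one_right (by positivity) (Real.ofDigits_le_one _)
  · exact Finset.card_image_le.trans (by simp)

lemma hasCovGrowth_digitSet (hb : 1 < b) {A : Finset (Fin b)} {a : ℝ} (ha : 0 ≤ a)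
    (hA : (#A : ℝ) ≤ (b : ℝ) ^ a) : HasCovGrowth (digitSet A) a := by
  have hb' : (1 : ℝ) < b := by exact_mod_cast hb
  refine ⟨(b : ℝ) ^ a, ?_⟩
  filter_upwards [Ioc_mem_nhdsGT one_pos] with ε hε
  obtain ⟨n, hn, hn'⟩ := exists_nat_pow_near_of_lt_one hε.1 hε.2 (by positivity)
    (inv_lt_one_of_one_lt₀ hb')
  rw [inv_pow] at hn hn'
  obtain ⟨F, hF, hcard⟩ := exists_cover_digitSet A (n + 1)
  refine ⟨F, hF.trans (iUnion₂_mono fun x _ => closedBall_subset_ball hn), ?_⟩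
  have hnε : (b : ℝ) ^ n ≤ 1 / ε := by
    rw [one_div]
    exact le_inv_of_le_inv₀ hε.1 hn'
  calc (#F : ℝ) ≤ (#A : ℝ) ^ (n + 1) := by exact_mod_cast hcard
    _ ≤ ((b : ℝ) ^ a) ^ (n + 1) := by gcongr
    _ = (b : ℝ) ^ a * ((b : ℝ) ^ n) ^ a := by
        rw [pow_succ', ← Real.rpow_mul_natCast (by positivity), ← Real.rpow_natCast_mul
          (by positivity), mul_comm a]
    _ ≤ (b : ℝ) ^ a * (1 / ε) ^ a := by gcongr

lemma hasCovGrowth_Icc (l r : ℝ) : HasCovGrowth (Icc l r) 1 := by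
  have hunit : HasCovGrowth (Icc (0 : ℝ) 1) 1 := by
    rw [← digitSet_univ one_lt_two]
    exact hasCovGrowth_digitSet one_lt_two zero_le_one (by simp)
  have hlipschitz : LipschitzWith ‖r - l‖₊ fun θ : ℝ => l + θ • (r - l) :=
    LipschitzWith.of_dist_le_mul fun θ θ' => by
      rw [dist_add_left, dist_eq_norm, ← sub_smul, norm_smul, mul_comm, dist_eq_norm, coe_nnnorm]
  refine HasCovGrowth.mono ?_ Icc_subset_uIcc
  rw [← segment_eq_uIcc, segment_eq_image']
  exact hunit.image hlipschitz

lemma hasCovGrowth_of_isBounded {ι : Type*} [Fintype ι] {E : Set (ι → ℝ)} (hE : IsBounded E) :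
    HasCovGrowth E (Fintype.card ι) := by
  obtain ⟨R, hR⟩ := hE.subset_closedBall 0
  have h := HasCovGrowth.pi fun _ : ι => hasCovGrowth_Icc (-R) R
  simp only [Finset.sum_const, Finset.card_univ, nsmul_eq_mul, mul_one] at h
  exact h.mono fun y hy i _ =>
    abs_le.1 ((norm_le_pi_norm y i).trans (mem_closedBall_zero_iff.1 (hR hy)))

end DigitSet

section LowerBound

variable {X : Type*} [PseudoMetricSpace X]

lemma exists_Icc_rat_subset_of_iUnion {g : ℕ → Set ℝ} (hg : ∀ j, IsClosed (g j)) {l r : ℝ}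
    (hlr : l < r) (hcover : Icc l r ⊆ ⋃ j, g j) :
    ∃ (j : ℕ) (a b : ℚ), (a : ℝ) < b ∧ Icc (a : ℝ) b ⊆ g j := by
  have hdense : Dense (⋃ j, interior (g j ∪ (Ioo l r)ᶜ)) := by
    refine dense_iUnion_interior_of_closed (fun j => (hg j).union isOpen_Ioo.isClosed_compl) ?_
    rw [← iUnion_union, eq_univ_iff_forall]
    exact fun y => (em (y ∈ Ioo l r)).imp (fun hy => hcover (Ioo_subset_Icc_self hy)) id
  obtain ⟨y, hy, hyU⟩ := hdense.inter_open_nonempty (Ioo l r) isOpen_Ioo (nonempty_Ioo.2 hlr)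
  obtain ⟨j, hyj⟩ := mem_iUnion.1 hyU
  obtain ⟨c, d, ⟨hcy, hyd⟩, hcd⟩ := mem_nhds_iff_exists_Ioo_subset.1
    ((isOpen_Ioo.inter isOpen_interior).mem_nhds ⟨hy, hyj⟩)
  obtain ⟨a, hca, hay⟩ := exists_rat_btwn hcy
  obtain ⟨b, hyb, hbd⟩ := exists_rat_btwn hyd
  refine ⟨j, a, b, hay.trans hyb, (Icc_subset_Ioo hca hbd).trans fun z hz => ?_⟩
  exact (interior_subset (hcd hz).2).resolve_right (not_not_intro (hcd hz).1)

lemma exists_measure_ne_zero_of_forall_segment {Ω : Type*} [MeasurableSpace Ω] {μ : Measure Ω}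
    {T : Set Ω} (hT : μ T ≠ 0) {f : ℕ → Set X} {γ : Ω → ℝ → X} (hγ : ∀ t ∈ T, Continuous (γ t))
    (hseg : ∀ t ∈ T, ∃ l r : ℝ, l < r ∧ ∀ y ∈ Icc l r, γ t y ∈ ⋃ j, f j) :
    ∃ T' ⊆ T, μ T' ≠ 0 ∧ ∃ (j : ℕ) (a b : ℝ), a < b ∧
      ∀ t ∈ T', ∀ y ∈ Icc a b, γ t y ∈ closure (f j) := by
  let A : ℕ × ℚ × ℚ → Set Ω := fun q =>
    {t ∈ T | (q.2.1 : ℝ) < q.2.2 ∧ ∀ y ∈ Icc (q.2.1 : ℝ) q.2.2, γ t y ∈ closure (f q.1)}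
  have hTA : T ⊆ ⋃ q, A q := by
    intro t ht
    obtain ⟨l, r, hlr, hcover⟩ := hseg t ht
    obtain ⟨j, a, b, hab, hj⟩ := exists_Icc_rat_subset_of_iUnion
      (fun j => (isClosed_closure (s := f j)).preimage (hγ t ht)) hlr fun y hy =>
        mem_iUnion.2 ((mem_iUnion.1 (hcover y hy)).imp fun j hj => subset_closure hj)
    exact mem_iUnion.2 ⟨(j, a, b), ht, hab, hj⟩
  obtain ⟨⟨j, a, b⟩, hq⟩ : ∃ q, μ (A q) ≠ 0 := by
    by_contra! hnull
    exact hT (measure_mono_null hTA (measure_iUnion_null hnull))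
  obtain ⟨t, ht⟩ := nonempty_of_measure_ne_zero hq
  exact ⟨A (j, a, b), fun t ht => ht.1, hq, j, a, b, ht.2.1, fun t ht => ht.2.2⟩

lemma exists_hasCovGrowth_image_of_forall_segment {Ω : Type*} [MeasurableSpace Ω] {μ : Measure Ω}
    {T : Set Ω} (hT : μ T ≠ 0) {f : ℕ → Set X} {α : ℝ} (hf : ∀ j, HasCovGrowth (f j) α)
    {p q : X → ℝ} (hp : LipschitzWith 1 p) (hq : LipschitzWith 1 q) {x : Ω → ℝ} {γ : Ω → ℝ → X}
    (hγ : ∀ t ∈ T, Continuous (γ t)) (hpγ : ∀ t y, p (γ t y) = x t) (hqγ : ∀ t y, q (γ t y) = y)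
    (hseg : ∀ t ∈ T, ∃ l r : ℝ, l < r ∧ ∀ y ∈ Icc l r, γ t y ∈ ⋃ j, f j) :
    ∃ T' ⊆ T, μ T' ≠ 0 ∧ HasCovGrowth (x '' T') (α - 1) := by
  obtain ⟨T', hT'T, hT', j, a, b, hab, hsegment⟩ :=
    exists_measure_ne_zero_of_forall_segment hT hγ hseg
  refine ⟨T', hT'T, hT', (hf j).closure.sub_one_of_segments hp hq hab ?_⟩
  rintro _ ⟨t, ht, rfl⟩ y hy
  exact ⟨γ t y, hsegment t ht y hy, hpγ t y, hqγ t y⟩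

lemma seventeen_div_eleven_le_of_hasCovGrowth {T : Set ℝ} (hT : volume T ≠ 0)
    {f : ℕ → Set (Fin 2 → ℝ)} {α : ℝ} (hf : ∀ j, HasCovGrowth (f j) α)
    (hsquare : ∀ t ∈ T, ∃ s > (0 : ℝ), squareBdry ![t, 0] s ⊆ ⋃ j, f j) : 17 / 11 ≤ α := by
  choose! s hs hsf using hsquare
  have hp : LipschitzWith 1 fun z : Fin 2 → ℝ => z 0 := LipschitzWith.eval 0
  have hq : LipschitzWith 1 fun z : Fin 2 → ℝ => z 1 := LipschitzWith.eval 1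
  obtain ⟨T₁, hT₁T, hT₁, hadd⟩ := exists_hasCovGrowth_image_of_forall_segment hT hf hp hq
    (x := fun t => t + s t) (γ := fun t y => ![t + s t, y]) (fun _ _ => by fun_prop)
    (fun _ _ => rfl) (fun _ _ => rfl) fun t ht => ⟨-s t, s t, by linarith [hs t ht], fun y hy =>
      hsf t ht (by simp [squareBdry, abs_of_pos (hs t ht), abs_le.2 hy])⟩
  obtain ⟨T₂, hT₂T₁, hT₂, hsub⟩ := exists_hasCovGrowth_image_of_forall_segment hT₁ hf hp hq
    (x := fun t => t - s t) (γ := fun t y => ![t - s t, y]) (fun _ _ => by fun_prop)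
    (fun _ _ => rfl) (fun _ _ => rfl) fun t ht =>
      ⟨-s t, s t, by linarith [hs t (hT₁T ht)], fun y hy =>
        hsf t (hT₁T ht) (by simp [squareBdry, abs_of_pos (hs t (hT₁T ht)), abs_le.2 hy])⟩
  have hT₂T := hT₂T₁.trans hT₁T
  obtain ⟨T₃, hT₃T₂, hT₃, hv⟩ := exists_hasCovGrowth_image_of_forall_segment hT₂ hf hq hp
    (x := s) (γ := fun t y => ![y, s t]) (fun _ _ => by fun_prop)
    (fun _ _ => rfl) (fun _ _ => rfl) fun t ht =>
      ⟨t - s t, t + s t, by linarith [hs t (hT₂T ht)], fun y hy => hsf t (hT₂T ht) (by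
        have : |y - t| ≤ s t := by rwa [abs_sub_le_iff, sub_le_iff_le_add', sub_le_comm, and_comm]
        simp [squareBdry, abs_of_pos (hs t (hT₂T ht)), this])⟩
  have hgrowth := HasCovGrowth.image_of_add_of_sub (u := id)
    (hadd.mono (image_mono (hT₃T₂.trans hT₂T₁))) (hsub.mono (image_mono hT₃T₂)) hv
  rw [image_id] at hgrowth
  linarith [hgrowth.one_le_of_volume_ne_zero hT₃]

lemma le_dimP_of_forall_hasCovGrowth {ι : Type*} [Fintype ι] {E : Set (ι → ℝ)} {a : ℝ}
    (h : ∀ (f : ℕ → Set (ι → ℝ)) (α : ℝ), E ⊆ ⋃ j, f j → (∀ j, HasCovGrowth (f j) α) → a ≤ α) :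
    a ≤ dimP E := by
  refine le_csInf ⟨_, fun j => ball 0 (j : ℝ), ?_, fun j => isBounded_ball, rfl⟩ ?_
  · exact (iUnion_ball_nat (0 : ι → ℝ)).symm ▸ subset_univ E
  rintro _ ⟨f, hEf, hf, rfl⟩
  refine le_of_forall_gt_imp_ge_of_dense fun α hα => h f α hEf fun j => ?_
  have hgrowth := fun j => hasCovGrowth_of_isBounded (hf j)
  have hbdd : BddAbove (range fun j => dimM (f j)) :=
    ⟨_, forall_mem_range.2 fun j => (hgrowth j).dimM_le (Nat.cast_nonneg _)⟩
  exact (hgrowth j).of_dimM_lt (Nat.cast_nonneg _) ((le_ciSup hbdd j).trans_lt hα)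

lemma seventeen_div_eleven_le_dimP {T : Set ℝ} (hT : volume T ≠ 0) {B : Set (Fin 2 → ℝ)}
    (hB : ∀ t ∈ T, ∃ s > (0 : ℝ), squareBdry ![t, 0] s ⊆ B) : 17 / 11 ≤ dimP B :=
  le_dimP_of_forall_hasCovGrowth fun _ _ hBf hf =>
    seventeen_div_eleven_le_of_hasCovGrowth hT hf fun t ht =>
      (hB t ht).imp fun _ hs => ⟨hs.1, hs.2.trans hBf⟩

end LowerBound

section Construction

variable {D : Set ℝ} {R a : ℝ}

/-- The points of the square `[-R, R]²` having a coordinate in `D`; it contains every square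
boundary inside `[-R, R]²` whose sides lie on lines `x = d` and `y = d` with `d ∈ D`. -/
def gridSet (D : Set ℝ) (R : ℝ) : Set (Fin 2 → ℝ) :=
  univ.pi ![D, Icc (-R) R] ∪ univ.pi ![Icc (-R) R, D]

lemma isCompact_gridSet (hD : IsCompact D) : IsCompact (gridSet D R) :=
  (isCompact_univ_pi (Fin.forall_fin_two.2 ⟨hD, isCompact_Icc⟩)).union
    (isCompact_univ_pi (Fin.forall_fin_two.2 ⟨isCompact_Icc, hD⟩))

lemma HasCovGrowth.gridSet (hD : HasCovGrowth D a) : HasCovGrowth (gridSet D R) (a + 1) := by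
  have hI := hasCovGrowth_Icc (-R) R
  have h₀ := HasCovGrowth.pi (E := ![D, Icc (-R) R]) (a := ![a, 1])
    (Fin.forall_fin_two.2 ⟨hD, hI⟩)
  have h₁ := HasCovGrowth.pi (E := ![Icc (-R) R, D]) (a := ![1, a])
    (Fin.forall_fin_two.2 ⟨hI, hD⟩)
  rw [Fin.sum_univ_two] at h₀ h₁
  exact h₀.union (add_comm (1 : ℝ) a ▸ h₁)

lemma squareBdry_subset_gridSet (hD : D ⊆ Icc (-R) R) {t s : ℝ} (hadd : t + s ∈ D)
    (hsub : t - s ∈ D) (hs : s ∈ D) (hneg : -s ∈ D) : squareBdry ![t, 0] s ⊆ gridSet D R := by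
  intro y hy
  have hmax : max |y 0 - t| |y 1| = s := by simpa [squareBdry] using hy
  have h₀ : y 0 ∈ Icc (-R) R := Icc_subset_Icc (hD hsub).1 (hD hadd).2
    (mem_Icc_iff_abs_le.1 (by rw [abs_sub_comm]; exact hmax ▸ le_max_left _ _))
  have h₁ : y 1 ∈ Icc (-R) R := Icc_subset_Icc (hD hneg).1 (hD hs).2
    (abs_le.1 (hmax ▸ le_max_right _ _))
  rcases max_choice |y 0 - t| |y 1| with hside | hside <;> rw [hside] at hmax
  · refine Or.inl fun i _ => Fin.forall_fin_two (p := fun i => y i ∈ ![D, Icc (-R) R] i).2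
      ⟨?_, h₁⟩ i
    rcases eq_or_eq_neg_of_abs_eq hmax with h | h
    · exact (sub_eq_iff_eq_add'.1 h).symm ▸ hadd
    · exact (sub_eq_iff_eq_add'.1 h).symm ▸ hsub
  · refine Or.inr fun i _ => Fin.forall_fin_two (p := fun i => y i ∈ ![Icc (-R) R, D] i).2
      ⟨h₀, ?_⟩ i
    rcases eq_or_eq_neg_of_abs_eq hmax with h | h
    · exact h ▸ hs
    · exact h ▸ hneg

lemma exists_eq_sum_mul_of_forall_digit {ι : Type*} [Fintype ι] {b : ℕ} (hb : 1 < b)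
    {A : Finset (Fin b)} {w : ι → ℕ}
    (hw : ∀ x : Fin b, ∃ p : ι → Fin b, (∀ i, p i ∈ A) ∧ (x : ℕ) = ∑ i, w i * (p i : ℕ))
    {t : ℝ} (ht : t ∈ Icc (0 : ℝ) 1) :
    ∃ z : ι → ℝ, (∀ i, z i ∈ digitSet A) ∧ t = ∑ i, w i * z i := by
  choose p hpA hp using hw
  rw [← digitSet_univ hb] at ht
  obtain ⟨d, -, rfl⟩ := ht
  refine ⟨fun i => Real.ofDigits fun n => p (d n) i, fun i => ⟨_, fun n => hpA (d n) i, rfl⟩, ?_⟩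
  simp only [Real.ofDigits, ← tsum_mul_left]
  rw [← Summable.tsum_finsetSum fun i _ => Real.summable_ofDigitsTerm.mul_left _]
  refine tsum_congr fun n => ?_
  simp only [Real.ofDigitsTerm, ← mul_assoc, ← Finset.sum_mul]
  rw [hp (d n)]
  push_cast
  rfl

/-- The values `c + α z + β z'` for `z` and `z'` with base-8 digits in `{0, 1}`. -/
def digitCombinations (c α β : ℝ) : Set ℝ :=
  (fun z : Fin 2 → ℝ => c + α * z 0 + β * z 1) ''
    univ.pi fun _ => digitSet ({0, 1} : Finset (Fin 8))

lemma isCompact_digitCombinations (c α β : ℝ) : IsCompact (digitCombinations c α β) :=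
  (isCompact_univ_pi fun _ => isCompact_digitSet _).image (by fun_prop)

lemma mem_digitCombinations {c α β x z z' : ℝ} (hz : z ∈ digitSet ({0, 1} : Finset (Fin 8)))
    (hz' : z' ∈ digitSet ({0, 1} : Finset (Fin 8))) (hx : c + α * z + β * z' = x) :
    x ∈ digitCombinations c α β :=
  ⟨![z, z'], fun i _ => by fin_cases i <;> assumption, hx⟩

lemma hasCovGrowth_digitCombinations (c α β : ℝ) :
    HasCovGrowth (digitCombinations c α β) (2 / 3) := by
  have hdigit : HasCovGrowth (digitSet ({0, 1} : Finset (Fin 8))) (1 / 3) := by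
    refine hasCovGrowth_digitSet (by norm_num) (by norm_num) (le_of_eq ?_)
    rw [Finset.card_pair (by decide), show ((8 : ℕ) : ℝ) = 2 ^ (3 : ℝ) by norm_num,
      ← Real.rpow_mul zero_le_two]
    norm_num
  have hpi := HasCovGrowth.pi fun _ : Fin 2 => hdigit
  rw [Fin.sum_univ_two, show (1 / 3 + 1 / 3 : ℝ) = 2 / 3 by norm_num] at hpi
  exact hpi.image (((LipschitzWith.const c).add ((lipschitzWith_smul α).comp
    (LipschitzWith.eval 0))).add ((lipschitzWith_smul β).comp (LipschitzWith.eval 1)))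

/-- The values of `t + s`, `t - s`, `s` and `-s` for `t = 4 z₁ + 2 z₂ + z₃` and
`s = 2 + 2 z₂ - z₃`. Each of them involves only two of the three `zᵢ`. -/
def sideCoords : Set ℝ :=
  digitCombinations 2 4 4 ∪ digitCombinations (-2) 4 2 ∪
    (digitCombinations 2 2 (-1) ∪ digitCombinations (-2) (-2) 1)

lemma isCompact_sideCoords : IsCompact sideCoords :=
  ((isCompact_digitCombinations _ _ _).union (isCompact_digitCombinations _ _ _)).union
    ((isCompact_digitCombinations _ _ _).union (isCompact_digitCombinations _ _ _))

lemma hasCovGrowth_sideCoords : HasCovGrowth sideCoords (2 / 3) :=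
  ((hasCovGrowth_digitCombinations _ _ _).union (hasCovGrowth_digitCombinations _ _ _)).union
    ((hasCovGrowth_digitCombinations _ _ _).union (hasCovGrowth_digitCombinations _ _ _))

lemma exists_sideCoords {t : ℝ} (ht : t ∈ Icc (0 : ℝ) 1) :
    ∃ s > 0, t + s ∈ sideCoords ∧ t - s ∈ sideCoords ∧ s ∈ sideCoords ∧ -s ∈ sideCoords := by
  obtain ⟨z, hz, ht⟩ := exists_eq_sum_mul_of_forall_digit (b := 8) (A := {0, 1})
    (w := ![4, 2, 1]) (by norm_num)
    (fun x => ⟨![x / 4, x / 2 % 2, x % 2], by revert x; decide⟩) ht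
  have hsplit : t = 4 * z 0 + 2 * z 1 + z 2 := by simpa [Fin.sum_univ_three] using ht
  have hunit := fun i => digitSet_subset_Icc _ (hz i)
  refine ⟨2 + 2 * z 1 - z 2, by linarith [(hunit 1).1, (hunit 2).2], ?_, ?_, ?_, ?_⟩
  · exact Or.inl (Or.inl (mem_digitCombinations (hz 0) (hz 1) (by linarith)))
  · exact Or.inl (Or.inr (mem_digitCombinations (hz 0) (hz 2) (by linarith)))
  · exact Or.inr (Or.inl (mem_digitCombinations (hz 1) (hz 2) (by ring)))
  · exact Or.inr (Or.inr (mem_digitCombinations (hz 1) (hz 2) (by ring)))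

lemma exists_isCompact_dimM_le :
    ∃ B : Set (Fin 2 → ℝ), IsCompact B ∧
      (∀ t ∈ Icc (0 : ℝ) 1, ∃ s > (0 : ℝ), squareBdry ![t, 0] s ⊆ B) ∧ dimM B ≤ 5 / 3 := by
  obtain ⟨R, hR⟩ := isCompact_sideCoords.isBounded.subset_closedBall 0
  rw [Real.closedBall_eq_Icc, zero_sub, zero_add] at hR
  refine ⟨gridSet sideCoords R, isCompact_gridSet isCompact_sideCoords, fun t ht => ?_, ?_⟩
  · obtain ⟨s, hs, hadd, hsub, hmem, hneg⟩ := exists_sideCoords ht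
    exact ⟨s, hs, squareBdry_subset_gridSet hR hadd hsub hmem hneg⟩
  · linarith [hasCovGrowth_sideCoords.gridSet (R := R) |>.dimM_le (by norm_num)]

end Construction

theorem stmt12_general :
    (∀ T : Set ℝ, volume T ≠ 0 → ∀ B : Set (Fin 2 → ℝ),
      (∀ t ∈ T, ∃ s > (0 : ℝ), squareBdry ![t, 0] s ⊆ B) → (17 : ℝ) / 11 ≤ dimP B) ∧
    (∃ B : Set (Fin 2 → ℝ), IsCompact B ∧
      (∀ t ∈ Icc (0 : ℝ) 1, ∃ s > (0 : ℝ), squareBdry ![t, 0] s ⊆ B) ∧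
      dimM B ≤ (5 : ℝ) / 3) :=
  ⟨fun _ hT _ hB => seventeen_div_eleven_le_dimP hT hB, exists_isCompact_dimM_le⟩

/-- If `B ⊆ ℝ²` contains the boundary of an axis-parallel square centered at each point of
`[0,1] × {0}`, then `dim_P B ≥ 17/11`; moreover there is a compact such `B` with
`dim_M B ≤ 7/4`. (The plane carries the sup metric, which is bi-Lipschitz equivalent to the
Euclidean one and hence yields the same Minkowski and packing dimensions.) -/
theorem stmt12 :
    (∀ B : Set (Fin 2 → ℝ),
      (∀ t ∈ Icc (0 : ℝ) 1, ∃ s > (0 : ℝ), squareBdry ![t, 0] s ⊆ B) →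
      (17 : ℝ) / 11 ≤ dimP B) ∧
    (∃ B : Set (Fin 2 → ℝ), IsCompact B ∧
      (∀ t ∈ Icc (0 : ℝ) 1, ∃ s > (0 : ℝ), squareBdry ![t, 0] s ⊆ B) ∧
      dimM B ≤ (7 : ℝ) / 4) := by
  obtain ⟨hlower, B, hB, hsquare, hdim⟩ := stmt12_general
  exact ⟨hlower _ (by simp), B, hB, hsquare, hdim.trans (by norm_num)⟩
end
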